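/- Uniformity principle in dimension one: Fix a demand-to-supply ratio β > 0 and a constant M ≥ max{1, 1/β}, and let k = 1. There exist a constant C > 0 depending only on β and M and an integer N such that for all n ≥ N with m = βn, and for all service-range vectors r, r' ∈ [0, M]^n satisfying r ⪰ r' (r majorizes r') and ‖r^↓ − r'^↓‖₁ > θn for some θ > C·(log n / n)^{1/3}, the expected maximum matching sizes satisfy μ_m(r') > μ_m(r). -/

import Mathlib

open MeasureTheory
open scoped Classical

noncomputable section

/-- A matching of a bipartite compatibility relation, given as a finite set of
supply-demand pairs with compatible endpoints and pairwise distinct coordinates. -/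
def IsBipMatching {a b : ℕ} (adj : Fin a → Fin b → Prop) (M : Finset (Fin a × Fin b)) : Prop :=
  (∀ e ∈ M, adj e.1 e.2) ∧
    ∀ e ∈ M, ∀ e' ∈ M, e ≠ e' → e.1 ≠ e'.1 ∧ e.2 ≠ e'.2

/-- The maximum cardinality of a matching of the bipartite compatibility relation. -/
def matchingNumber {a b : ℕ} (adj : Fin a → Fin b → Prop) : ℕ :=
  sSup {c | ∃ M : Finset (Fin a × Fin b), IsBipMatching adj M ∧ M.card = c}

/-- The uniform measure on the unit cube `[0,1]^k`. -/
def unifCube (k : ℕ) : Measure (EuclideanSpace ℝ (Fin k)) :=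
  volume.restrict {x | ∀ i, x i ∈ Set.Icc (0 : ℝ) 1}

/-- Compatibility: supply node `i` can serve demand node `j` iff the demand location is
within distance `(r i / n)^(1/k)` of the supply location. -/
def adjOf (k ntot : ℕ) {a b : ℕ} (S : Fin a → EuclideanSpace ℝ (Fin k)) (r : Fin a → ℝ)
    (D : Fin b → EuclideanSpace ℝ (Fin k)) (i : Fin a) (j : Fin b) : Prop :=
  dist (S i) (D j) ≤ (r i / (ntot : ℝ)) ^ ((1 : ℝ) / (k : ℝ))

/-- Expected maximum matching size, with supply and demand locations i.i.d. uniform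
on the unit cube `[0,1]^k`. -/
def muU (k ntot m : ℕ) {a : ℕ} (r : Fin a → ℝ) : ℝ :=
  ∫ S : Fin a → EuclideanSpace ℝ (Fin k),
    ∫ D : Fin m → EuclideanSpace ℝ (Fin k),
      (matchingNumber (fun i j => adjOf k ntot S r D i j) : ℝ)
        ∂(Measure.pi fun _ => unifCube k) ∂(Measure.pi fun _ => unifCube k)

/-- The non-increasing rearrangement of a finite real vector. -/
def descSort {n : ℕ} (x : Fin n → ℝ) : Fin n → ℝ :=
  x ∘ Tuple.sort (fun i => -x i)

/-- `x` majorizes `y`. -/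
def Majorizes {n : ℕ} (x y : Fin n → ℝ) : Prop :=
  (∀ ℓ : ℕ,
      ∑ i ∈ Finset.univ.filter (fun i : Fin n => (i : ℕ) < ℓ), descSort y i ≤
        ∑ i ∈ Finset.univ.filter (fun i : Fin n => (i : ℕ) < ℓ), descSort x i) ∧
    ∑ i, x i = ∑ i, y i

/-!
Sort both vectors.  Then `r'` is reached from `r` by at most `n` Robin Hood transfers, each moving
an amount `δ` from a larger range to a smaller one, so it suffices that a transfer increases the
expected matching size by `c δ² - O(log n / n)`.

By König's theorem the matching number is the minimum of `coverSize T = #{supplies with a neighbour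
in T} + #Tᶜ` over sets `T` of demands.  Remove the two supplies `i`, `j` of a transfer and let `P`
be the smallest minimizer for the remaining graph: the demands that one further supply could serve.
Unless `i` and `j` compete with each other, adding them back increases the matching number by the
number of those among them that reach `P`.  They do not compete if a gap in the demands separates
them, and the probability that there is no such gap is `O(log n / n)`.

In dimension one, the measure of the `v`-neighbourhood of a set `P` is a concave function of `v`, so
balancing the radii of `i` and `j` increases the expected number of supplies that reach `P`.  The
gain is quantified by two adjacent points of `P` between which the smaller neighbourhood still grows
on both sides while the larger one is saturated; two demands that are isolated from everything
except each other provide such a gap with probability of order `δ²`.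
-/

section Covers

open Finset

variable {ι κ : Type*} {adj adj' : ι → κ → Prop} {k : ι} {T U : Finset κ}

/-- Indicator, as a natural number, that supply `k` has a neighbour in the demand set `T`. -/
def hit (adj : ι → κ → Prop) (k : ι) (T : Finset κ) : ℕ :=
  if ∃ d ∈ T, adj k d then 1 else 0

lemma sum_hit (A : Finset ι) : ∑ k ∈ A, hit adj k T = #{k ∈ A | ∃ d ∈ T, adj k d} := by
  simp [hit]

lemma hit_le_one : hit adj k T ≤ 1 := by
  unfold hit; split_ifs <;> simp

lemma hit_mono (hTU : T ⊆ U) : hit adj k T ≤ hit adj k U := by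
  have : (∃ d ∈ T, adj k d) → ∃ d ∈ U, adj k d := fun ⟨d, hd, hkd⟩ => ⟨d, hTU hd, hkd⟩
  unfold hit; split_ifs <;> simp_all

lemma hit_congr (h : ∀ d, (d ∈ T ∧ adj k d) ↔ (d ∈ U ∧ adj' k d)) :
    hit adj k T = hit adj' k U := by
  simp only [hit, h]

variable [Fintype κ] [DecidableEq κ] {A : Finset ι} {i j : ι}

/-- The size of the vertex cover of the graph induced on the supplies `A` that consists of the
neighbours in `A` of the demand set `T` and of the demands outside `T`. -/
def coverSize (adj : ι → κ → Prop) (A : Finset ι) (T : Finset κ) : ℕ :=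
  ∑ k ∈ A, hit adj k T + #Tᶜ

lemma coverSize_congr (h : ∀ k ∈ A, ∀ d, adj k d ↔ adj' k d) :
    coverSize adj A T = coverSize adj' A T := by
  unfold coverSize
  congr 1
  exact sum_congr rfl fun k hk => hit_congr fun d => by rw [h k hk d]

lemma coverSize_insert [DecidableEq ι] (hk : k ∉ A) :
    coverSize adj (insert k A) T = coverSize adj A T + hit adj k T := by
  simp only [coverSize, sum_insert hk]; ring

lemma coverSize_univ_eq_add_hit_add_hit [Fintype ι] [DecidableEq ι] (hij : i ≠ j) :
    coverSize adj univ T = coverSize adj {i, j}ᶜ T + hit adj i T + hit adj j T := by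
  have huniv : (univ : Finset ι) = insert j (insert i {i, j}ᶜ) := by
    ext k; by_cases k = i <;> by_cases k = j <;> simp_all
  rw [huniv, coverSize_insert (by simp [hij.symm]), coverSize_insert (by simp)]

lemma coverSize_inter_add_coverSize_union_le :
    coverSize adj A (T ∩ U) + coverSize adj A (T ∪ U) ≤
      coverSize adj A T + coverSize adj A U := by
  have hhit (k : ι) : hit adj k (T ∩ U) + hit adj k (T ∪ U) ≤ hit adj k T + hit adj k U := by
    have : (∃ d ∈ T ∪ U, adj k d) → (∃ d ∈ T, adj k d) ∨ ∃ d ∈ U, adj k d := by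
      rintro ⟨d, hd, hkd⟩
      exact (mem_union.1 hd).imp (fun h => ⟨d, h, hkd⟩) fun h => ⟨d, h, hkd⟩
    have hT := hit_mono (adj := adj) (k := k) (inter_subset_left : T ∩ U ⊆ T)
    have hU := hit_mono (adj := adj) (k := k) (inter_subset_right : T ∩ U ⊆ U)
    unfold hit at *
    split_ifs at * <;> grind
  have hsum := sum_le_sum fun k (_ : k ∈ A) => hhit k
  have hcard : #(T ∩ U)ᶜ + #(T ∪ U)ᶜ = #Tᶜ + #Uᶜ := by
    rw [compl_inter, compl_union, card_union_add_card_inter]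
  simp only [sum_add_distrib] at hsum
  unfold coverSize
  linarith

/-- The minimality of the vertex cover described by `T`. -/
def IsMinCover (adj : ι → κ → Prop) (A : Finset ι) (T : Finset κ) : Prop :=
  ∀ U, coverSize adj A T ≤ coverSize adj A U

/-- The smallest demand set describing a minimum vertex cover.  Its elements are the demands
left exposed by some maximum matching. -/
def exposedSet (adj : ι → κ → Prop) (A : Finset ι) : Finset κ :=
  {d | ∀ T, IsMinCover adj A T → d ∈ T}

lemma exposedSet_subset (hT : IsMinCover adj A T) : exposedSet adj A ⊆ T :=
  fun _ hd => (mem_filter.1 hd).2 T hT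

lemma exposedSet_congr (h : ∀ k ∈ A, ∀ d, adj k d ↔ adj' k d) :
    exposedSet adj A = exposedSet adj' A := by
  have hmin (T : Finset κ) : IsMinCover adj A T ↔ IsMinCover adj' A T := by
    simp only [IsMinCover, coverSize_congr h]
  simp only [exposedSet, hmin]

lemma IsMinCover.inter (hT : IsMinCover adj A T) (hU : IsMinCover adj A U) :
    IsMinCover adj A (T ∩ U) := by
  intro V
  have := coverSize_inter_add_coverSize_union_le (adj := adj) (A := A) (T := T) (U := U)
  have := hT (T ∪ U)
  have := hU V
  omega

lemma isMinCover_exposedSet : IsMinCover adj A (exposedSet adj A) := by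
  obtain ⟨V, -, hV⟩ := exists_min_image univ (coverSize adj A) univ_nonempty
  obtain ⟨W, hW, hWcard⟩ := exists_min_image ({T | IsMinCover adj A T} : Finset (Finset κ)) card
    ⟨V, mem_filter.2 ⟨mem_univ V, fun U => hV U (mem_univ U)⟩⟩
  have hWmin : IsMinCover adj A W := by simpa using hW
  have hWsub (T : Finset κ) (hT : IsMinCover adj A T) : W ⊆ T := by
    have := hWcard (W ∩ T) (by simpa using hWmin.inter hT)
    exact inter_eq_left.1 (eq_of_subset_of_card_le inter_subset_left this)
  have heq : exposedSet adj A = W := (exposedSet_subset hWmin).antisymm fun d hd =>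
    mem_filter.2 ⟨mem_univ d, fun T hT => hWsub T hT hd⟩
  rwa [heq]

lemma mem_exposedSet_of_isolated {d : κ} (hd : ∀ k ∈ A, ¬ adj k d) : d ∈ exposedSet adj A := by
  refine mem_filter.2 ⟨mem_univ d, fun T hT => by_contra fun hdT => ?_⟩
  have hhit : ∑ k ∈ A, hit adj k (insert d T) = ∑ k ∈ A, hit adj k T :=
    sum_congr rfl fun k hk => hit_congr fun e => by
      by_cases he : e = d <;> simp_all
  have hcard : #Tᶜ = #(insert d T)ᶜ + 1 := by
    rw [compl_insert, card_erase_add_one (mem_compl.2 hdT)]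
  have := hT (insert d T)
  unfold coverSize at this
  omega

lemma coverSize_exposedSet_add_hit_le (T : Finset κ) :
    coverSize adj A (exposedSet adj A) + hit adj k (exposedSet adj A) ≤
      coverSize adj A T + hit adj k T := by
  have hmin := isMinCover_exposedSet (adj := adj) (A := A)
  rcases lt_or_ge (coverSize adj A (exposedSet adj A)) (coverSize adj A T) with hlt | hge
  · have := hit_le_one (adj := adj) (k := k) (T := exposedSet adj A)
    omega
  · have hsub : exposedSet adj A ⊆ T := exposedSet_subset fun U => hge.trans (hmin U)
    exact add_le_add (hmin T) (hit_mono hsub)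

lemma coverSize_splice_add_coverSize_splice_le {L : Finset κ}
    (hL : ∀ k ∈ A, (∀ d, adj k d → d ∈ L) ∨ ∀ d, adj k d → d ∉ L) :
    coverSize adj A (T ∩ L ∪ U \ L) + coverSize adj A (U ∩ L ∪ T \ L) ≤
      coverSize adj A T + coverSize adj A U := by
  have hhit : ∀ k ∈ A, hit adj k (T ∩ L ∪ U \ L) + hit adj k (U ∩ L ∪ T \ L) =
      hit adj k T + hit adj k U := by
    intro k hk
    rcases hL k hk with hin | hout
    · congr 1 <;> exact hit_congr fun d => by have := hin d; simp; tauto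
    · rw [add_comm]
      congr 1 <;> exact hit_congr fun d => by have := hout d; simp; tauto
  have hsum := sum_congr rfl hhit
  have hcard : #(T ∩ L ∪ U \ L)ᶜ + #(U ∩ L ∪ T \ L)ᶜ = #Tᶜ + #Uᶜ := by
    rw [← card_union_add_card_inter, ← card_union_add_card_inter Tᶜ]
    congr 2 <;> ext d <;> simp <;> tauto
  simp only [sum_add_distrib] at hsum
  unfold coverSize
  linarith

-- Exchanging `T` with the exposed set on one side of `L` only isolates the effect of one of the
-- two supplies, to which the single-supply inequality applies.
lemma coverSize_exposedSet_add_hit_add_hit_le {L : Finset κ}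
    (hL : ∀ k ∈ A, (∀ d, adj k d → d ∈ L) ∨ ∀ d, adj k d → d ∉ L)
    (hi : ∀ d, adj i d → d ∈ L) (hj : ∀ d, adj j d → d ∉ L) (T : Finset κ) :
    coverSize adj A (exposedSet adj A) + hit adj i (exposedSet adj A) +
        hit adj j (exposedSet adj A) ≤
      coverSize adj A T + hit adj i T + hit adj j T := by
  have hi_eq (W : Finset κ) : hit adj i (T ∩ L ∪ W \ L) = hit adj i T :=
    hit_congr fun d => by have := hi d; simp; tauto
  have hj_eq (W : Finset κ) : hit adj j (W ∩ L ∪ T \ L) = hit adj j T :=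
    hit_congr fun d => by have := hj d; simp; tauto
  have hsplice := coverSize_splice_add_coverSize_splice_le (T := T) (U := exposedSet adj A) hL
  have hiT := coverSize_exposedSet_add_hit_le (adj := adj) (A := A) (k := i)
    (T ∩ L ∪ exposedSet adj A \ L)
  have hjT := coverSize_exposedSet_add_hit_le (adj := adj) (A := A) (k := j)
    (exposedSet adj A ∩ L ∪ T \ L)
  rw [hi_eq] at hiT
  rw [hj_eq] at hjT
  omega

end Covers

section Koenig

open Finset

variable {a b : ℕ} {adj : Fin a → Fin b → Prop}

lemma IsBipMatching.card_le_coverSize {P : Finset (Fin a × Fin b)} (hP : IsBipMatching adj P)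
    (T : Finset (Fin b)) : #P ≤ coverSize adj univ T := by
  have hfst : #{e ∈ P | e.2 ∈ T} ≤ ∑ k, hit adj k T := by
    rw [sum_hit]
    refine card_le_card_of_injOn Prod.fst (fun e he => ?_) fun e he e' he' heq => ?_
    · have := mem_filter.1 he
      simpa using ⟨e.2, this.2, hP.1 e this.1⟩
    · by_contra hne
      exact (hP.2 e (mem_filter.1 he).1 e' (mem_filter.1 he').1 hne).1 heq
  have hsnd : #{e ∈ P | e.2 ∉ T} ≤ #Tᶜ := by
    refine card_le_card_of_injOn Prod.snd (fun e he => ?_) fun e he e' he' heq => ?_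
    · simpa using (mem_filter.1 he).2
    · by_contra hne
      exact (hP.2 e (mem_filter.1 he).1 e' (mem_filter.1 he').1 hne).2 heq
  rw [← card_filter_add_card_filter_not (s := P) (fun e => e.2 ∈ T)]
  exact add_le_add hfst hsnd

lemma matchingNumber_le_coverSize (T : Finset (Fin b)) :
    matchingNumber adj ≤ coverSize adj univ T := by
  refine csSup_le ⟨0, ∅, ⟨by simp, by simp⟩, card_empty⟩ ?_
  rintro c ⟨P, hP, rfl⟩
  exact hP.card_le_coverSize T

lemma IsBipMatching.card_le_matchingNumber {P : Finset (Fin a × Fin b)}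
    (hP : IsBipMatching adj P) : #P ≤ matchingNumber adj := by
  refine le_csSup ⟨coverSize adj univ ∅, ?_⟩ ⟨P, hP, rfl⟩
  rintro c ⟨Q, hQ, rfl⟩
  exact hQ.card_le_coverSize ∅

-- Hall's theorem after adding `q` dummy elements to every set.
lemma exists_injective_sum_of_card_le_add {ι κ : Type*} [DecidableEq ι] (f : κ → Finset ι) (q : ℕ)
    (hf : ∀ s : Finset κ, #s ≤ #(s.biUnion f) + q) :
    ∃ g : κ → ι ⊕ Fin q, Function.Injective g ∧ ∀ d k, g d = Sum.inl k → k ∈ f d := by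
  have hHall (s : Finset κ) :
      #s ≤ #(s.biUnion fun d => (f d).disjSum (univ : Finset (Fin q))) := by
    rcases s.eq_empty_or_nonempty with rfl | ⟨e, he⟩
    · simp
    have hsub : (s.biUnion f).disjSum univ ⊆
        s.biUnion fun d => (f d).disjSum (univ : Finset (Fin q)) := by
      rintro (k | c) hx
      · simpa using hx
      · simpa using ⟨e, he⟩
    refine (hf s).trans ?_
    simpa [card_disjSum] using card_le_card hsub
  obtain ⟨g, hg, hgf⟩ := (all_card_le_biUnion_card_iff_exists_injective _).1 hHall
  exact ⟨g, hg, fun d k hdk => by simpa [hdk] using hgf d⟩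

lemma le_matchingNumber_add_of_injective {q : ℕ} {g : Fin b → Fin a ⊕ Fin q}
    (hg : Function.Injective g) (hadj : ∀ d k, g d = Sum.inl k → adj k d) :
    b ≤ matchingNumber adj + q := by
  set P : Finset (Fin a × Fin b) := {e | g e.2 = Sum.inl e.1}
  have memP (e) : e ∈ P ↔ g e.2 = Sum.inl e.1 := by simp [P]
  have hP : IsBipMatching adj P := by
    refine ⟨fun e he => hadj _ _ ((memP e).1 he), fun e he e' he' hne => ?_⟩
    rw [memP] at he he'
    refine ⟨fun h => hne (Prod.ext h (hg (by rw [he, he', h]))), fun h => hne (Prod.ext ?_ h)⟩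
    exact Sum.inl_injective (by rw [← he, ← he', h])
  have hsub : univ.image g ⊆ (P.image Prod.fst).disjSum univ := by
    intro x hx
    obtain ⟨d, -, rfl⟩ := mem_image.1 hx
    rcases hgd : g d with k | c
    · simpa using ⟨d, (memP (k, d)).2 hgd⟩
    · simp
  have hcard := card_le_card hsub
  rw [card_image_of_injective _ hg, card_disjSum] at hcard
  simp only [card_univ, Fintype.card_fin] at hcard
  have := card_image_le (s := P) (f := Prod.fst)
  have := hP.card_le_matchingNumber
  omega

lemma exists_coverSize_le_matchingNumber : ∃ T, coverSize adj univ T ≤ matchingNumber adj := by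
  set W := exposedSet adj univ
  have hmin : IsMinCover adj univ W := isMinCover_exposedSet
  have hWb : coverSize adj univ W ≤ b := by simpa [coverSize, hit] using hmin ∅
  have hdeficiency (s : Finset (Fin b)) :
      #s ≤ #(s.biUnion fun d => {k | adj k d}) + (b - coverSize adj univ W) := by
    have hnbhd : #(s.biUnion fun d => {k | adj k d}) = ∑ k, hit adj k s := by
      rw [sum_hit]; congr 1; ext; simp
    have hs := hmin s
    have hcompl := s.card_add_card_compl
    rw [Fintype.card_fin] at hcompl
    rw [hnbhd]
    unfold coverSize at *
    omega
  obtain ⟨g, hg, hgadj⟩ := exists_injective_sum_of_card_le_add _ _ hdeficiency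
  have := le_matchingNumber_add_of_injective (adj := adj) hg fun d k h => by simpa using hgadj d k h
  exact ⟨W, by omega⟩

lemma coverSize_exposedSet_compl_pair_le_add_two {i j : Fin a} (hij : i ≠ j) :
    coverSize adj univ (exposedSet adj {i, j}ᶜ) ≤ matchingNumber adj + 2 := by
  obtain ⟨T, hT⟩ := exists_coverSize_le_matchingNumber (adj := adj)
  have hmin := isMinCover_exposedSet (adj := adj) (A := {i, j}ᶜ) T
  have hi := hit_le_one (adj := adj) (k := i) (T := exposedSet adj {i, j}ᶜ)
  have hj := hit_le_one (adj := adj) (k := j) (T := exposedSet adj {i, j}ᶜ)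
  rw [coverSize_univ_eq_add_hit_add_hit hij] at hT ⊢
  omega

lemma matchingNumber_comp_perm (σ : Equiv.Perm (Fin a)) :
    matchingNumber (fun k d => adj (σ k) d) = matchingNumber adj := by
  have hcover (T) : coverSize (fun k d => adj (σ k) d) univ T = coverSize adj univ T := by
    unfold coverSize
    congr 1
    exact Equiv.sum_comp σ fun k => hit adj k T
  apply le_antisymm
  · obtain ⟨T, hT⟩ := exists_coverSize_le_matchingNumber (adj := adj)
    exact (matchingNumber_le_coverSize T).trans ((hcover T).trans_le hT)
  · obtain ⟨T, hT⟩ := exists_coverSize_le_matchingNumber (adj := fun k d => adj (σ k) d)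
    exact (matchingNumber_le_coverSize T).trans ((hcover T).ge.trans hT)

end Koenig

section Resampling

variable {ι α β : Type*} [MeasurableSpace α] [MeasurableSpace β] {μ : Measure α} {ν : Measure β}

lemma measurable_measure_update [DecidableEq ι] [SFinite μ] {A : Set ((ι → α) × β)}
    (hA : MeasurableSet A) (i : ι) :
    Measurable fun ω : (ι → α) × β => μ {x | (Function.update ω.1 i x, ω.2) ∈ A} :=
  have hupdate : Measurable fun p : ((ι → α) × β) × α => (Function.update p.1.1 i p.2, p.1.2) := by
    fun_prop
  measurable_measure_prodMk_left (hupdate hA)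

variable [Fintype ι] [IsProbabilityMeasure μ] [IsProbabilityMeasure ν]

lemma measurePreserving_comp_perm (σ : Equiv.Perm ι) :
    MeasurePreserving (fun S : ι → α => S ∘ σ) (Measure.pi fun _ => μ) (Measure.pi fun _ => μ) :=
  measurePreserving_arrowCongr' _ _ σ.symm (MeasurableEquiv.refl α) fun _ => MeasurePreserving.id μ

lemma measurePreserving_update [DecidableEq ι] (i : ι) :
    MeasurePreserving (fun p : (ι → α) × α => Function.update p.1 i p.2)
      ((Measure.pi fun _ => μ).prod μ) (Measure.pi fun _ => μ) := by
  refine ⟨measurable_update', (Measure.pi_eq fun s hs => ?_).symm⟩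
  have hpreimage : (fun p : (ι → α) × α => Function.update p.1 i p.2) ⁻¹' Set.univ.pi s =
      Set.univ.pi (Function.update s i Set.univ) ×ˢ s i := by
    ext p
    simp only [Set.mem_preimage, Set.mem_univ_pi, Set.mem_prod]
    rw [Function.forall_update_iff p.1 fun k x => x ∈ s k,
      Function.forall_update_iff s fun k t => p.1 k ∈ t]
    simp [and_comm]
  rw [Measure.map_apply measurable_update' (MeasurableSet.univ_pi hs), hpreimage,
    Measure.prod_prod, Measure.pi_pi, ← Finset.prod_erase_mul _ _ (Finset.mem_univ i),
    ← Finset.prod_erase_mul _ (fun k => μ (s k)) (Finset.mem_univ i), Function.update_self,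
    measure_univ, mul_one]
  congr 1
  exact Finset.prod_congr rfl fun k hk => by
    rw [Function.update_of_ne (Finset.ne_of_mem_erase hk)]

variable [DecidableEq ι]

lemma measurePreserving_update_fst (i : ι) :
    MeasurePreserving (fun p : ((ι → α) × β) × α => (Function.update p.1.1 i p.2, p.1.2))
      (((Measure.pi fun _ => μ).prod ν).prod μ) ((Measure.pi fun _ => μ).prod ν) := by
  have hswap := (MeasurePreserving.id (Measure.pi fun _ : ι => μ)).prod
    (Measure.measurePreserving_swap (μ := ν) (ν := μ))
  exact ((measurePreserving_update i).prod (MeasurePreserving.id ν)).comp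
    (((measurePreserving_prodAssoc _ _ _).symm _).comp
      (hswap.comp (measurePreserving_prodAssoc _ _ _)))

variable {A : Set ((ι → α) × β)}

lemma measure_eq_lintegral_update (hA : MeasurableSet A) (i : ι) :
    ((Measure.pi fun _ => μ).prod ν) A =
      ∫⁻ ω, μ {x | (Function.update ω.1 i x, ω.2) ∈ A} ∂((Measure.pi fun _ => μ).prod ν) := by
  have hmp := measurePreserving_update_fst (μ := μ) (ν := ν) i
  rw [← hmp.measure_preimage hA.nullMeasurableSet, Measure.prod_apply (hmp.measurable hA)]
  rfl

lemma measure_eq_lintegral_update_symm (hA : MeasurableSet A) (i : ι) :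
    ((Measure.pi fun _ => μ).prod ν) A =
      ∫⁻ x, ((Measure.pi fun _ => μ).prod ν) {ω | (Function.update ω.1 i x, ω.2) ∈ A} ∂μ := by
  have hmp := measurePreserving_update_fst (μ := μ) (ν := ν) i
  rw [← hmp.measure_preimage hA.nullMeasurableSet, Measure.prod_apply_symm (hmp.measurable hA)]
  rfl

end Resampling

section UnitInterval

/-- The uniform distribution on `[0, 1]`. -/
def unifUnit : Measure ℝ := volume.restrict (Set.Icc 0 1)

instance : IsProbabilityMeasure unifUnit := ⟨by simp [unifUnit]⟩

lemma unifUnit_le_volume : unifUnit ≤ volume := Measure.restrict_le_self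

lemma unifUnit_Ico {a b : ℝ} (ha : 0 ≤ a) (hb : b ≤ 1) :
    unifUnit (Set.Ico a b) = ENNReal.ofReal (b - a) := by
  have hsub : Set.Ico a b ⊆ Set.Icc 0 1 := fun x hx => ⟨ha.trans hx.1, hx.2.le.trans hb⟩
  rw [unifUnit, Measure.restrict_apply measurableSet_Ico, Set.inter_eq_left.2 hsub,
    Real.volume_Ico]

lemma unifUnit_Ioc {a b : ℝ} (ha : 0 ≤ a) (hb : b ≤ 1) :
    unifUnit (Set.Ioc a b) = ENNReal.ofReal (b - a) := by
  have hsub : Set.Ioc a b ⊆ Set.Icc 0 1 := fun x hx => ⟨ha.trans hx.1.le, hx.2.trans hb⟩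
  rw [unifUnit, Measure.restrict_apply measurableSet_Ioc, Set.inter_eq_left.2 hsub,
    Real.volume_Ioc]

lemma measurePreserving_unifCube_one :
    MeasurePreserving (fun x : EuclideanSpace ℝ (Fin 1) => x 0) (unifCube 1) unifUnit := by
  have hvol : MeasurePreserving (fun x : EuclideanSpace ℝ (Fin 1) => x 0) volume volume :=
    (volume_preserving_funUnique (Fin 1) ℝ).comp (PiLp.volume_preserving_ofLp (Fin 1))
  have hcube : {x : EuclideanSpace ℝ (Fin 1) | ∀ i, x i ∈ Set.Icc (0 : ℝ) 1} =
      (fun x : EuclideanSpace ℝ (Fin 1) => x 0) ⁻¹' Set.Icc (0 : ℝ) 1 := by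
    ext x
    simp [Fin.forall_fin_one]
  rw [unifCube, hcube]
  exact hvol.restrict_preimage measurableSet_Icc

end UnitInterval

section RandomGraph

variable {n m : ℕ}

/-- Supply locations together with demand locations on the line. -/
abbrev Locations (n m : ℕ) : Type := (Fin n → ℝ) × (Fin m → ℝ)

/-- The law of `n` supply and `m` demand locations drawn independently and uniformly. -/
def sample (n m : ℕ) : Measure (Locations n m) :=
  (Measure.pi fun _ => unifUnit).prod (Measure.pi fun _ => unifUnit)

instance : IsProbabilityMeasure (sample n m) := by
  unfold sample; infer_instance

/-- The compatibility graph of the locations `ω` when supply `i` has service radius `ρ i`.  In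
dimension one the radius is the service range divided by the number of supplies. -/
def inRange (ρ : Fin n → ℝ) (ω : Locations n m) (i : Fin n) (d : Fin m) : Prop :=
  |ω.1 i - ω.2 d| ≤ ρ i

/-- The expected maximum matching size as a function of the service radii. -/
def expMatching (m : ℕ) (ρ : Fin n → ℝ) : ℝ :=
  ∫ ω, (matchingNumber (inRange ρ ω) : ℝ) ∂sample n m

lemma measurable_inRange (ρ : Fin n → ℝ) : Measurable (inRange (m := m) ρ) := by
  refine measurable_pi_iff.2 fun i => measurable_pi_iff.2 fun d => ?_
  exact measurableSet_setOfPred.1 (measurableSet_le (by fun_prop) (by fun_prop))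

lemma integrable_comp_inRange (ρ : Fin n → ℝ) (Φ : (Fin n → Fin m → Prop) → ℝ) :
    Integrable (fun ω => Φ (inRange ρ ω)) (sample n m) :=
  (Integrable.of_finite (f := Φ)).comp_measurable (measurable_inRange ρ)

lemma adjOf_one_eq_inRange (N : ℕ) (r : Fin n → ℝ) (S : Fin n → EuclideanSpace ℝ (Fin 1))
    (D : Fin m → EuclideanSpace ℝ (Fin 1)) :
    adjOf 1 N S r D = inRange (fun i => r i / N) (fun i => S i 0, fun d => D d 0) := by
  ext i d
  simp [adjOf, inRange, EuclideanSpace.dist_eq, Real.sqrt_sq_eq_abs, Real.dist_eq]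

lemma muU_one_eq_expMatching (r : Fin n → ℝ) (N : ℕ) :
    muU 1 N m r = expMatching m fun i => r i / N := by
  have hcoord (a : ℕ) : MeasurePreserving
      (fun (S : Fin a → EuclideanSpace ℝ (Fin 1)) k => S k 0)
      (Measure.pi fun _ => unifCube 1) (Measure.pi fun _ => unifUnit) :=
    measurePreserving_pi _ _ fun _ => measurePreserving_unifCube_one
  have : SigmaFinite (unifCube 1) := by unfold unifCube; infer_instance
  have hmp : MeasurePreserving _ _ (sample n m) := (hcoord n).prod (hcoord m)
  have hint := integrable_comp_inRange (fun i => r i / N) fun adj : Fin n → Fin m → Prop =>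
    (matchingNumber adj : ℝ)
  unfold muU expMatching
  simp only [adjOf_one_eq_inRange]
  rw [← hmp.map_eq, integral_map hmp.measurable.aemeasurable (hmp.map_eq ▸ hint.1)]
  exact (integral_prod _ (hmp.integrable_comp_of_integrable hint)).symm

lemma measurePreserving_sample_comp_perm (σ : Equiv.Perm (Fin n)) :
    MeasurePreserving (fun ω : Locations n m => (ω.1 ∘ σ, ω.2)) (sample n m) (sample n m) :=
  (measurePreserving_comp_perm σ).prod (MeasurePreserving.id _)

lemma expMatching_comp_perm (ρ : Fin n → ℝ) (σ : Equiv.Perm (Fin n)) :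
    expMatching m (ρ ∘ σ) = expMatching m ρ := by
  have hmp := measurePreserving_sample_comp_perm (m := m) σ
  have hmeas : AEStronglyMeasurable (fun ω => (matchingNumber (inRange (ρ ∘ σ) ω) : ℝ))
      ((sample n m).map fun ω => (ω.1 ∘ σ, ω.2)) :=
    hmp.map_eq.symm ▸ (integrable_comp_inRange (ρ ∘ σ) fun adj => (matchingNumber adj : ℝ)).1
  calc expMatching m (ρ ∘ σ)
      = ∫ ω, (matchingNumber (inRange (ρ ∘ σ) (ω.1 ∘ σ, ω.2)) : ℝ) ∂sample n m := by
        rw [← integral_map hmp.measurable.aemeasurable hmeas, hmp.map_eq, expMatching]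
    _ = expMatching m ρ := by
        refine integral_congr_ae (Filter.Eventually.of_forall fun ω => ?_)
        exact congrArg Nat.cast (matchingNumber_comp_perm (adj := inRange ρ ω) σ)

lemma ae_sample_snd_mem_Icc : ∀ᵐ ω ∂sample n m, ∀ d, ω.2 d ∈ Set.Icc (0 : ℝ) 1 := by
  refine ae_all_iff.2 fun d => ?_
  have hmp : MeasurePreserving (fun ω : Locations n m => ω.2 d) (sample n m) unifUnit :=
    (measurePreserving_eval (fun _ => unifUnit) d).comp measurePreserving_snd
  exact hmp.quasiMeasurePreserving.ae (ae_restrict_mem measurableSet_Icc)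

end RandomGraph

section Shells

open Metric Set

variable {P : Set ℝ} {s t u v x y δ Δ : ℝ}

/-- The points whose distance to `P` lies in `(u, v]`. -/
def shell (P : Set ℝ) (u v : ℝ) : Set ℝ := {s | infDist s P ∈ Ioc u v}

/-- The points lying in a gap of `P` at a distance in `(y, y + δ]` from its left end and in
`(y + δ, y + 2δ]` from its right end. -/
def gapSet (P : Set ℝ) (y δ : ℝ) : Set ℝ :=
  {s | ∃ p ∈ P, ∃ q ∈ P, s - p ∈ Ioc y (y + δ) ∧ q - s ∈ Ioc (y + δ) (y + 2 * δ) ∧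
    Disjoint P (Ioo p q)}

lemma measurableSet_shell : MeasurableSet (shell P u v) :=
  (continuous_infDist_pt P).measurable measurableSet_Ioc

lemma cthickening_diff_cthickening (hu : 0 ≤ u) (huv : u ≤ v) :
    cthickening v P \ cthickening u P = shell P u v := by
  rcases P.eq_empty_or_nonempty with rfl | hne
  · ext s; simp [shell, hu.not_gt]
  ext s
  simp only [mem_sdiff, mem_cthickening_iff, shell, mem_ofPred_eq, mem_Ioc, infDist, not_le]
  rw [ENNReal.ofReal_lt_iff_lt_toReal hu (infEDist_ne_top hne),
    ENNReal.le_ofReal_iff_toReal_le (infEDist_ne_top hne) (hu.trans huv), and_comm]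

lemma sub_infDist_mem_or_add_infDist_mem (hP : IsCompact P) (hne : P.Nonempty) (s : ℝ) :
    s - infDist s P ∈ P ∨ s + infDist s P ∈ P := by
  obtain ⟨p, hp, hsp⟩ := hP.exists_infDist_eq_dist hne s
  rw [hsp, Real.dist_eq]
  rcases abs_choice (s - p) with h | h
  · left; rwa [h, sub_sub_cancel]
  · right; rwa [h, neg_sub, add_sub_cancel]

lemma infDist_sub_of_sub_infDist_mem (hmem : t - infDist t P ∈ P) (h0 : 0 ≤ Δ)
    (hΔ : Δ ≤ infDist t P) : infDist (t - Δ) P = infDist t P - Δ := by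
  have hupper := infDist_le_dist_of_mem (x := t - Δ) hmem
  have hlower := infDist_le_infDist_add_dist (s := P) (x := t) (y := t - Δ)
  rw [Real.dist_eq] at hupper hlower
  rw [abs_of_nonneg (by linarith)] at hupper hlower
  linarith

lemma infDist_add_of_add_infDist_mem (hmem : t + infDist t P ∈ P) (h0 : 0 ≤ Δ)
    (hΔ : Δ ≤ infDist t P) : infDist (t + Δ) P = infDist t P - Δ := by
  have hupper := infDist_le_dist_of_mem (x := t + Δ) hmem
  have hlower := infDist_le_infDist_add_dist (s := P) (x := t) (y := t + Δ)
  rw [Real.dist_eq, abs_of_nonpos (by linarith)] at hupper hlower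
  linarith

lemma infDist_eq_of_mem_gap {p q : ℝ} (hp : p ∈ P) (hgap : Disjoint P (Ioo p q))
    (hps : p ≤ s) (hpq : s - p ≤ q - s) : infDist s P = s - p := by
  apply le_antisymm
  · have := infDist_le_dist_of_mem (x := s) hp
    rwa [Real.dist_eq, abs_of_nonneg (by linarith)] at this
  · refine (le_infDist ⟨p, hp⟩).2 fun e he => ?_
    have he' : e ≤ p ∨ q ≤ e := by
      by_contra! h
      exact hgap.le_bot ⟨he, h⟩
    rw [Real.dist_eq, le_abs]
    rcases he' with h | h
    · left; linarith
    · right; linarith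

/-- The points of `shell P u v` in `[0, 1]` that recede from `P`, and stay closest to the same
point on their left, when moved right by `Δ`. -/
def shellLeft (P : Set ℝ) (u v Δ : ℝ) : Set ℝ :=
  {s ∈ shell P u v ∩ Icc 0 1 | s - infDist s P ∈ P ∧ infDist (s + Δ) P = infDist s P + Δ}

/-- The mirror image of `shellLeft`. -/
def shellRight (P : Set ℝ) (u v Δ : ℝ) : Set ℝ :=
  {s ∈ shell P u v ∩ Icc 0 1 | s + infDist s P ∈ P ∧ infDist (s - Δ) P = infDist s P + Δ}

lemma mem_shellLeft (hPI : P ⊆ Icc 0 1) (hu : 0 ≤ u) (h0 : 0 ≤ Δ)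
    (hs : s + Δ ∈ shell P (u + Δ) (v + Δ) ∩ Icc 0 1)
    (hmem : s + Δ - infDist (s + Δ) P ∈ P) : s ∈ shellLeft P u v Δ := by
  obtain ⟨⟨hlt, hle⟩, -, hs1⟩ := hs
  have hdist := infDist_sub_of_sub_infDist_mem hmem h0 (by linarith)
  rw [add_sub_cancel_right] at hdist
  rw [show s + Δ - infDist (s + Δ) P = s - infDist s P by linarith] at hmem
  have := (hPI hmem).1
  have := infDist_nonneg (x := s) (s := P)
  exact ⟨⟨⟨by linarith, by linarith⟩, by linarith, by linarith⟩, hmem, by linarith⟩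

lemma mem_shellRight (hPI : P ⊆ Icc 0 1) (hu : 0 ≤ u) (h0 : 0 ≤ Δ)
    (hs : s - Δ ∈ shell P (u + Δ) (v + Δ) ∩ Icc 0 1)
    (hmem : s - Δ + infDist (s - Δ) P ∈ P) : s ∈ shellRight P u v Δ := by
  obtain ⟨⟨hlt, hle⟩, hs0, -⟩ := hs
  have hdist := infDist_add_of_add_infDist_mem hmem h0 (by linarith)
  rw [sub_add_cancel] at hdist
  rw [show s - Δ + infDist (s - Δ) P = s + infDist s P by linarith] at hmem
  have := (hPI hmem).2
  have := infDist_nonneg (x := s) (s := P)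
  exact ⟨⟨⟨by linarith, by linarith⟩, by linarith, by linarith⟩, hmem, by linarith⟩

lemma disjoint_shellLeft_shellRight (hu : 0 ≤ u) (hΔ : 0 < Δ) :
    Disjoint (shellLeft P u v Δ) (shellRight P u v Δ) := by
  refine disjoint_left.2 fun s ⟨⟨⟨hlt, _⟩, _⟩, _, hright⟩ ⟨_, hmem, _⟩ => ?_
  have hdist := infDist_le_dist_of_mem (x := s + Δ) hmem
  rw [hright, Real.dist_eq, le_abs] at hdist
  rcases hdist with h | h <;> linarith

lemma disjoint_gapSet_shellLeft_union_shellRight (hu : 0 ≤ u) (hδ : 0 < δ) (hΔ : δ ≤ Δ) :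
    Disjoint (gapSet P u δ) (shellLeft P u (u + δ) Δ ∪ shellRight P u (u + δ) Δ) := by
  rw [disjoint_left]
  rintro s ⟨p, hp, q, hq, ⟨hp1, hp2⟩, ⟨hq1, hq2⟩, hgap⟩ (⟨⟨⟨hlt, -⟩, -⟩, -, hright⟩ | ⟨-, hmem, -⟩)
  · have hdist := infDist_le_dist_of_mem (x := s + Δ) hq
    rw [hright, Real.dist_eq, le_abs] at hdist
    rcases hdist with h | h <;> linarith
  · rw [infDist_eq_of_mem_gap hp hgap (by linarith) (by linarith)] at hmem
    exact hgap.le_bot ⟨hmem, by linarith, by linarith⟩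

lemma gapSet_subset_shell (hy : 0 ≤ y) : gapSet P y δ ⊆ shell P y (y + δ) := by
  rintro s ⟨p, hp, q, -, hps, hqs, hgap⟩
  unfold shell
  rwa [mem_ofPred_eq, infDist_eq_of_mem_gap hp hgap (by linarith [hps.1])
    (by linarith [hps.2, hqs.1])]

-- Move every point of the outer shell by `Δ` towards its nearest point of `P`.
lemma exists_subset_shellLeft_subset_shellRight (hP : IsCompact P) (hPI : P ⊆ Icc 0 1)
    (hu : 0 ≤ u) (hΔ : 0 ≤ Δ) :
    ∃ A ⊆ shellLeft P u v Δ, ∃ B ⊆ shellRight P u v Δ, MeasurableSet A ∧ MeasurableSet B ∧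
      volume A + volume B = unifUnit (shell P (u + Δ) (v + Δ)) := by
  rcases P.eq_empty_or_nonempty with rfl | hne
  · have hempty : shell ∅ (u + Δ) (v + Δ) = ∅ := by
      simp [shell, (add_nonneg hu hΔ).not_gt]
    exact ⟨∅, empty_subset _, ∅, empty_subset _, by simp [hempty]⟩
  set X := shell P (u + Δ) (v + Δ) ∩ Icc 0 1
  set leftPart : Set ℝ := {s | s - infDist s P ∈ P}
  have hX : MeasurableSet X := measurableSet_shell.inter measurableSet_Icc
  have hleft : MeasurableSet leftPart :=
    (measurable_id.sub (continuous_infDist_pt P).measurable) hP.measurableSet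
  have hshift : volume ((· - Δ) ⁻¹' (X \ leftPart)) = volume (X \ leftPart) :=
    measure_preimage_add_right volume (-Δ) _
  refine ⟨(· + Δ) ⁻¹' (X ∩ leftPart), fun s hs => mem_shellLeft hPI hu hΔ hs.1 hs.2,
    (· - Δ) ⁻¹' (X \ leftPart), fun s hs => mem_shellRight hPI hu hΔ hs.1
      ((sub_infDist_mem_or_add_infDist_mem hP hne _).resolve_left hs.2),
    measurable_add_const Δ (hX.inter hleft), measurable_sub_const Δ (hX.diff hleft), ?_⟩
  rw [measure_preimage_add_right, hshift, measure_inter_add_sdiff _ hleft,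
    unifUnit, Measure.restrict_apply' measurableSet_Icc]

lemma unifUnit_shell_add_gapSet_le (hP : IsCompact P) (hPI : P ⊆ Icc 0 1) (hy : 0 ≤ y) (hδ : 0 < δ)
    (hxy : y + δ ≤ x - δ) :
    unifUnit (shell P (x - δ) x) + unifUnit (gapSet P y δ) ≤ unifUnit (shell P y (y + δ)) := by
  obtain ⟨Δ, rfl⟩ : ∃ Δ, x = y + δ + Δ := ⟨x - (y + δ), by ring⟩
  obtain ⟨A, hA, B, hB, hAm, hBm, hvol⟩ :=
    exists_subset_shellLeft_subset_shellRight (v := y + δ) hP hPI hy (by linarith : 0 ≤ Δ)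
  have hAB : Disjoint A B := (disjoint_shellLeft_shellRight hy (by linarith)).mono hA hB
  have hgap : Disjoint (gapSet P y δ ∩ Icc 0 1) (A ∪ B) :=
    (disjoint_gapSet_shellLeft_union_shellRight hy hδ (by linarith)).mono
      inter_subset_left (union_subset_union hA hB)
  rw [show y + δ + Δ - δ = y + Δ by ring, ← hvol, unifUnit,
    Measure.restrict_apply' measurableSet_Icc, Measure.restrict_apply' measurableSet_Icc,
    ← measure_union hAB hBm, add_comm, ← measure_union hgap (hAm.union hBm)]
  exact measure_mono (union_subset (inter_subset_inter_left _ (gapSet_subset_shell hy))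
    (union_subset (hA.trans fun s hs => hs.1) (hB.trans fun s hs => hs.1)))

lemma unifUnit_cthickening_eq_add_shell (hu : 0 ≤ u) (huv : u ≤ v) :
    unifUnit (cthickening v P) = unifUnit (cthickening u P) + unifUnit (shell P u v) := by
  rw [← cthickening_diff_cthickening hu huv, add_comm,
    ← measure_sdiff_add_inter (s := cthickening v P) isClosed_cthickening.measurableSet,
    inter_eq_right.2 (cthickening_mono huv P)]

lemma unifUnit_cthickening_add_cthickening_add_gapSet_le (hP : IsCompact P) (hPI : P ⊆ Icc 0 1)
    (hy : 0 ≤ y) (hδ : 0 < δ) (hxy : y + δ ≤ x - δ) :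
    unifUnit (cthickening x P) + unifUnit (cthickening y P) + unifUnit (gapSet P y δ) ≤
      unifUnit (cthickening (x - δ) P) + unifUnit (cthickening (y + δ) P) := by
  rw [unifUnit_cthickening_eq_add_shell (by linarith : 0 ≤ x - δ) (by linarith : x - δ ≤ x),
    unifUnit_cthickening_eq_add_shell hy (by linarith : y ≤ y + δ)]
  calc _ = unifUnit (cthickening (x - δ) P) + (unifUnit (cthickening y P) +
        (unifUnit (shell P (x - δ) x) + unifUnit (gapSet P y δ))) := by ring
    _ ≤ _ := by gcongr; exact unifUnit_shell_add_gapSet_le hP hPI hy hδ hxy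

end Shells

section Occupancy

open Finset

variable {α κ : Type*} {A : κ → Set α} {T : Finset κ} {m : ℕ} {w q : ℝ}

/-- The configurations of `m` points for which each of the sets `A c` with `c ∈ T` contains a
point. -/
def occupied (m : ℕ) (A : κ → Set α) (T : Finset κ) : Set (Fin m → α) :=
  {D | ∀ c ∈ T, ∃ d, D d ∈ A c}

lemma occupied_zero (hT : T.Nonempty) : occupied 0 A T = ∅ := by
  obtain ⟨c, hc⟩ := hT
  exact Set.eq_empty_of_forall_notMem fun D hD => (hD c hc).choose.elim0

lemma pow_add_mul_sub_le (hq0 : 0 ≤ q) (hq1 : q ≤ 1) (hw0 : 0 ≤ w) (k : ℕ) :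
    q ^ k + k * ((q ^ (k - 1) - q ^ k) * w) ≤ (q + w * (1 - q)) ^ k := by
  rcases k with _ | k
  · simp
  · have hwq : 0 ≤ w * (1 - q) := mul_nonneg hw0 (sub_nonneg.2 hq1)
    refine le_of_eq_of_le ?_ (pow_add_mul_le_add_pow hq0 (by linarith) (k + 1))
    rw [Nat.add_sub_cancel]
    ring

lemma pow_card_filter_notMem_le (hdisj : (T : Set κ).PairwiseDisjoint A) (hq0 : 0 ≤ q) (hq1 : q ≤ 1)
    (x : α) : ENNReal.ofReal (q ^ #{c ∈ T | x ∉ A c}) ≤ ENNReal.ofReal (q ^ #T) +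
      ∑ c ∈ T, (A c).indicator (fun _ => ENNReal.ofReal (q ^ (#T - 1) - q ^ #T)) x := by
  by_cases hx : ∃ c ∈ T, x ∈ A c
  · obtain ⟨c, hcT, hxc⟩ := hx
    have hfilter : {c ∈ T | x ∉ A c} = T.erase c := by
      ext c'
      rw [mem_filter, mem_erase, and_comm]
      refine and_congr_left fun hc' => ⟨?_, fun hne hxc' => ?_⟩
      · rintro hxc' rfl
        exact hxc' hxc
      · exact Set.disjoint_left.1 (hdisj hc' hcT hne) hxc' hxc
    calc ENNReal.ofReal (q ^ #{c ∈ T | x ∉ A c})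
        = ENNReal.ofReal (q ^ #T) + ENNReal.ofReal (q ^ (#T - 1) - q ^ #T) := by
          rw [hfilter, card_erase_of_mem hcT, ← ENNReal.ofReal_add (by positivity)
            (sub_nonneg.2 (pow_le_pow_of_le_one hq0 hq1 (Nat.sub_le _ _))), add_sub_cancel]
      _ ≤ _ := by
          gcongr
          have hsingle := single_le_sum_of_canonicallyOrdered (f := fun c =>
            (A c).indicator (fun _ => ENNReal.ofReal (q ^ (#T - 1) - q ^ #T)) x) hcT
          rwa [Set.indicator_of_mem hxc] at hsingle
  · push Not at hx
    rw [filter_true_of_mem hx]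
    exact le_self_add

variable [MeasurableSpace α] {μ : Measure α} [IsProbabilityMeasure μ]

lemma measurableSet_occupied (hA : ∀ c, MeasurableSet (A c)) :
    MeasurableSet (occupied m A T) := by
  have heq : occupied m A T = ⋂ c ∈ T, ⋃ d, (fun D : Fin m → α => D d) ⁻¹' A c := by
    ext D
    simp [occupied]
  rw [heq]
  exact T.measurableSet_biInter fun c _ => .iUnion fun d => measurable_pi_apply d (hA c)

lemma measure_occupied_succ (hA : ∀ c, MeasurableSet (A c)) :
    (Measure.pi fun _ => μ) (occupied (m + 1) A T) =
      ∫⁻ x, (Measure.pi fun _ => μ) (occupied m A {c ∈ T | x ∉ A c}) ∂μ := by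
  have hmp := (measurePreserving_piFinSuccAbove (fun _ : Fin (m + 1) => μ) 0).symm
  rw [← hmp.measure_preimage (measurableSet_occupied hA).nullMeasurableSet,
    Measure.prod_apply (hmp.measurable (measurableSet_occupied hA))]
  refine lintegral_congr fun x => congrArg _ ?_
  ext D
  simp only [occupied, Set.mem_preimage, Set.mem_ofPred_eq, Fin.exists_fin_succ, mem_filter,
    and_imp]
  exact forall₂_congr fun c _ => or_iff_not_imp_left

-- Occupation of disjoint cells is negatively correlated.
lemma measure_occupied_le (hw0 : 0 ≤ w) (hw1 : w ≤ 1) (hA : ∀ c, MeasurableSet (A c))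
    (hdisj : (T : Set κ).PairwiseDisjoint A) (hμ : ∀ c ∈ T, μ (A c) = ENNReal.ofReal w) :
    (Measure.pi fun _ => μ) (occupied m A T) ≤ ENNReal.ofReal ((1 - (1 - w) ^ m) ^ #T) := by
  induction m generalizing T with
  | zero =>
    rcases T.eq_empty_or_nonempty with rfl | hT
    · simpa using prob_le_one
    · simp [occupied_zero hT]
  | succ m ih =>
    set q : ℝ := 1 - (1 - w) ^ m with hq
    have hq0 : 0 ≤ q := sub_nonneg.2 (pow_le_one₀ (sub_nonneg.2 hw1) (sub_le_self 1 hw0))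
    have hq1 : q ≤ 1 := sub_le_self 1 (pow_nonneg (sub_nonneg.2 hw1) m)
    have hstep : 0 ≤ q ^ (#T - 1) - q ^ #T :=
      sub_nonneg.2 (pow_le_pow_of_le_one hq0 hq1 (Nat.sub_le _ _))
    calc (Measure.pi fun _ => μ) (occupied (m + 1) A T)
        ≤ ∫⁻ x, (ENNReal.ofReal (q ^ #T) + ∑ c ∈ T,
            (A c).indicator (fun _ => ENNReal.ofReal (q ^ (#T - 1) - q ^ #T)) x) ∂μ := by
          rw [measure_occupied_succ hA]
          refine lintegral_mono fun x => (ih (hdisj.subset ?_) ?_).trans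
            (pow_card_filter_notMem_le hdisj hq0 hq1 x)
          · exact_mod_cast filter_subset _ _
          · exact fun c hc => hμ c (mem_filter.1 hc).1
      _ = ENNReal.ofReal (q ^ #T + #T * ((q ^ (#T - 1) - q ^ #T) * w)) := by
          rw [lintegral_add_left measurable_const, lintegral_const, measure_univ, mul_one,
            lintegral_finsetSum _ fun c _ => measurable_const.indicator (hA c),
            sum_congr rfl fun c hc => by rw [lintegral_indicator_const (hA c), hμ c hc],
            sum_const, nsmul_eq_mul, ← ENNReal.ofReal_mul hstep, ← ENNReal.ofReal_natCast,
            ← ENNReal.ofReal_mul (by positivity),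
            ← ENNReal.ofReal_add (by positivity) (by positivity)]
      _ ≤ ENNReal.ofReal ((q + w * (1 - q)) ^ #T) :=
          ENNReal.ofReal_le_ofReal (pow_add_mul_sub_le hq0 hq1 hw0 _)
      _ = ENNReal.ofReal ((1 - (1 - w) ^ (m + 1)) ^ #T) := by rw [hq]; ring_nf

end Occupancy

section Crowding

open Finset

variable {n m t : ℕ} {i j k : Fin n} {ρ : Fin n → ℝ} {ω : Locations n m} {w H b : ℝ}

/-- The `c`-th cell of the grid of mesh `w` that starts at `x`. -/
def cell (x w : ℝ) (c : ℕ) : Set ℝ := Set.Ico (x + c * w) (x + (c + 1) * w)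

/-- The event that the supplies `i`, `j` are at distance less than `t * w`, or that each of the
first `t` cells to the right of the leftmost of them contains a demand. -/
def crowded (i j : Fin n) (t : ℕ) (w : ℝ) : Set (Locations n m) :=
  {ω | t * w ≤ |ω.1 i - ω.1 j| → ω.2 ∈ occupied m (cell (min (ω.1 i) (ω.1 j)) w) (range t)}

lemma pairwiseDisjoint_cell (hw : 0 ≤ w) (x : ℝ) (s : Set ℕ) : s.PairwiseDisjoint (cell x w) := by
  have hmono : Monotone fun c : ℕ => x + c * w := fun c c' h => by dsimp only; gcongr
  unfold cell
  simpa [Set.PairwiseDisjoint] using hmono.pairwise_disjoint_on_Ico_succ.set_pairwise s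

lemma unifUnit_cell {x : ℝ} {c : ℕ} (hw : 0 ≤ w) (hx : 0 ≤ x) (hc : c < t) (hxt : x + t * w ≤ 1) :
    unifUnit (cell x w c) = ENNReal.ofReal w := by
  have hct : ((c : ℝ) + 1) * w ≤ t * w := by gcongr; exact_mod_cast hc
  rw [cell, unifUnit_Ico (by positivity) (by linarith)]
  ring_nf

lemma sample_abs_sub_lt_le (hij : i ≠ j) (u : ℝ) :
    sample n m {ω | |ω.1 i - ω.1 j| < u} ≤ ENNReal.ofReal (2 * u) := by
  have hmeas : MeasurableSet {ω : Locations n m | |ω.1 i - ω.1 j| < u} :=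
    measurableSet_lt (by fun_prop) (by fun_prop)
  have hslice (ω : Locations n m) : {x | (Function.update ω.1 i x, ω.2) ∈
      {ω : Locations n m | |ω.1 i - ω.1 j| < u}} = Metric.ball (ω.1 j) u := by
    ext x
    simp [Function.update_of_ne hij.symm, Real.dist_eq]
  calc sample n m {ω | |ω.1 i - ω.1 j| < u}
      = ∫⁻ ω, unifUnit (Metric.ball (ω.1 j) u) ∂sample n m := by
        simp only [← hslice]
        exact measure_eq_lintegral_update hmeas i
    _ ≤ ∫⁻ _, ENNReal.ofReal (2 * u) ∂sample n m := by
        refine lintegral_mono fun ω => (unifUnit_le_volume _).trans ?_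
        rw [Real.volume_ball]
    _ = ENNReal.ofReal (2 * u) := by simp

lemma pi_occupied_cell_le {x y : ℝ} (hw0 : 0 ≤ w) (hw1 : w ≤ 1) (hx : x ∈ Set.Icc (0 : ℝ) 1)
    (hy : y ∈ Set.Icc (0 : ℝ) 1) (hxy : t * w ≤ |x - y|) :
    (Measure.pi fun _ => unifUnit) (occupied m (cell (min x y) w) (range t)) ≤
      ENNReal.ofReal ((1 - (1 - w) ^ m) ^ t) := by
  have hmax : min x y + t * w ≤ 1 := by
    have := max_sub_min_eq_abs' x y
    have := max_le hx.2 hy.2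
    linarith
  have hle := measure_occupied_le (A := cell (min x y) w) (m := m) hw0 hw1
    (fun _ => measurableSet_Ico) (pairwiseDisjoint_cell hw0 _ (range t))
    fun c hc => unifUnit_cell hw0 (le_min hx.1 hy.1) (mem_range.1 hc) hmax
  rwa [card_range] at hle

lemma measurableSet_crowded : MeasurableSet (crowded (m := m) i j t w) := by
  refine measurableSet_setOfPred.2 (Measurable.imp ?_ (Measurable.forall fun c =>
    measurable_const.imp (Measurable.exists fun d => Measurable.and ?_ ?_)))
  · exact measurableSet_setOfPred.1 (measurableSet_le (by fun_prop) (by fun_prop))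
  · exact measurableSet_setOfPred.1 (measurableSet_le (by fun_prop) (by fun_prop))
  · exact measurableSet_setOfPred.1 (measurableSet_lt (by fun_prop) (by fun_prop))

lemma sample_crowded_le (hij : i ≠ j) (hw0 : 0 ≤ w) (hw1 : w ≤ 1) :
    sample n m (crowded i j t w) ≤
      ENNReal.ofReal (2 * (t * w)) + ENNReal.ofReal ((1 - (1 - w) ^ m) ^ t) := by
  have hclose : MeasurableSet {ω : Locations n m | |ω.1 i - ω.1 j| < t * w} :=
    measurableSet_lt (by fun_prop) (by fun_prop)
  have hunif (k : Fin n) : ∀ᵐ S ∂Measure.pi fun _ => unifUnit, S k ∈ Set.Icc (0 : ℝ) 1 :=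
    (measurePreserving_eval (fun _ => unifUnit) k).quasiMeasurePreserving.ae
      (ae_restrict_mem measurableSet_Icc)
  have hfar : sample n m (crowded i j t w \ {ω | |ω.1 i - ω.1 j| < t * w}) ≤
      ENNReal.ofReal ((1 - (1 - w) ^ m) ^ t) := by
    rw [sample, Measure.prod_apply (measurableSet_crowded.diff hclose)]
    refine (lintegral_mono_ae (g := fun _ => ENNReal.ofReal ((1 - (1 - w) ^ m) ^ t)) ?_).trans
      (by simp)
    filter_upwards [hunif i, hunif j] with S hSi hSj
    by_cases hS : t * w ≤ |S i - S j|
    · refine (measure_mono ?_).trans (pi_occupied_cell_le hw0 hw1 hSi hSj hS)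
      exact fun D hD => hD.1 hS
    · rw [(_ : Prod.mk S ⁻¹' _ = ∅), measure_empty]
      · exact zero_le
      · exact Set.eq_empty_of_forall_notMem fun D hD => hD.2 (not_le.1 hS)
  calc sample n m (crowded i j t w)
      ≤ sample n m (crowded i j t w ∩ {ω | |ω.1 i - ω.1 j| < t * w}) +
          sample n m (crowded i j t w \ {ω | |ω.1 i - ω.1 j| < t * w}) :=
        measure_le_inter_add_sdiff _ _ _
    _ ≤ _ :=
        add_le_add ((measure_mono Set.inter_subset_right).trans (sample_abs_sub_lt_le hij _)) hfar

lemma forall_lt_or_forall_le_of_gap (hρ : ρ k ≤ H) (hgap : ∀ d, ω.2 d ∉ Set.Ico b (b + 2 * H)) :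
    (∀ d, inRange ρ ω k d → ω.2 d < b) ∨ ∀ d, inRange ρ ω k d → b ≤ ω.2 d := by
  by_contra! h
  obtain ⟨⟨d, hd, hbd⟩, d', hd', hbd'⟩ := h
  have := not_lt.1 fun hlt => hgap d ⟨hbd, hlt⟩
  rw [inRange, abs_le] at hd hd'
  linarith

lemma coverSize_exposedSet_add_hit_add_hit_le_of_gap (hH : 0 < H) (hρ : ∀ k, ρ k ≤ H)
    (hgap : ∀ d, ω.2 d ∉ Set.Ico b (b + 2 * H)) (hi : ω.1 i ≤ b) (hj : b + 2 * H ≤ ω.1 j)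
    (A : Finset (Fin n)) (T : Finset (Fin m)) :
    coverSize (inRange ρ ω) A (exposedSet (inRange ρ ω) A) +
        hit (inRange ρ ω) i (exposedSet (inRange ρ ω) A) +
        hit (inRange ρ ω) j (exposedSet (inRange ρ ω) A) ≤
      coverSize (inRange ρ ω) A T + hit (inRange ρ ω) i T + hit (inRange ρ ω) j T := by
  refine coverSize_exposedSet_add_hit_add_hit_le (L := {d | ω.2 d < b}) (fun k _ => ?_)
    (fun d hd => ?_) (fun d hd => ?_) T
  · simpa using forall_lt_or_forall_le_of_gap (hρ k) hgap
  · refine mem_filter.2 ⟨mem_univ d, ?_⟩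
    by_contra! hbd
    have := not_lt.1 fun hlt => hgap d ⟨hbd, hlt⟩
    rw [inRange, abs_le] at hd
    linarith [hρ i]
  · rw [inRange, abs_le] at hd
    simp only [mem_filter, mem_univ, true_and, not_lt]
    linarith [hρ j]

lemma exists_gap_of_notMem_crowded (hw : 0 ≤ w) (hω : ω ∉ crowded i j t w) :
    ∃ b, (∀ d, ω.2 d ∉ Set.Ico b (b + w)) ∧
      (ω.1 i ≤ b ∧ b + w ≤ ω.1 j ∨ ω.1 j ≤ b ∧ b + w ≤ ω.1 i) := by
  simp only [crowded, occupied, Set.mem_ofPred_eq, not_forall, not_exists] at hω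
  obtain ⟨hfar, c, hc, hempty⟩ := hω
  have hct : ((c : ℝ) + 1) * w ≤ t * w := by gcongr; exact_mod_cast mem_range.1 hc
  have hcw : 0 ≤ c * w := by positivity
  refine ⟨min (ω.1 i) (ω.1 j) + c * w, fun d => ?_, ?_⟩
  · have := hempty d
    rwa [cell, add_one_mul, ← add_assoc] at this
  · rcases le_total (ω.1 i) (ω.1 j) with hle | hle
    · rw [abs_sub_comm, abs_of_nonneg (sub_nonneg.2 hle)] at hfar
      rw [min_eq_left hle]
      left; constructor <;> linarith
    · rw [abs_of_nonneg (sub_nonneg.2 hle)] at hfar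
      rw [min_eq_right hle]
      right; constructor <;> linarith

lemma coverSize_exposedSet_le_matchingNumber (hij : i ≠ j) (hH : 0 < H) (hρ : ∀ k, ρ k ≤ H)
    (hω : ω ∉ crowded i j t (2 * H)) :
    coverSize (inRange ρ ω) univ (exposedSet (inRange ρ ω) {i, j}ᶜ) ≤
      matchingNumber (inRange ρ ω) := by
  obtain ⟨T, hT⟩ := exists_coverSize_le_matchingNumber (adj := inRange ρ ω)
  refine le_trans ?_ hT
  rw [coverSize_univ_eq_add_hit_add_hit hij, coverSize_univ_eq_add_hit_add_hit hij]
  obtain ⟨b, hgap, ⟨hi, hj⟩ | ⟨hj, hi⟩⟩ := exists_gap_of_notMem_crowded (by positivity) hω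
  · exact coverSize_exposedSet_add_hit_add_hit_le_of_gap hH hρ hgap hi hj _ T
  · have := coverSize_exposedSet_add_hit_add_hit_le_of_gap hH hρ hgap hj hi {i, j}ᶜ T
    omega

end Crowding

section IsolatedPairs

open Finset

variable {n m : ℕ} {i : Fin n} {p : Fin m × Fin m} {y δ H s : ℝ}

/-- The event that the only demands within `2 * H` of supply `i` are `p.1`, slightly farther than
`y` to its left, and `p.2`, slightly farther than `y + δ` to its right, and that no other supply is
within `2 * H`. -/
def isolatedPair (i : Fin n) (y δ H : ℝ) (p : Fin m × Fin m) : Set (Locations n m) :=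
  {ω | ω.1 i - ω.2 p.1 ∈ Set.Ioc y (y + δ) ∧ ω.2 p.2 - ω.1 i ∈ Set.Ioc (y + δ) (y + 2 * δ) ∧
    (∀ d, d ≠ p.1 → d ≠ p.2 → 2 * H < |ω.1 i - ω.2 d|) ∧
    ∀ k, k ≠ i → 2 * H < |ω.1 i - ω.1 k|}

/-- The event that some two demands form an isolated pair around supply `i`. -/
def hasIsolatedPair (m : ℕ) (i : Fin n) (y δ H : ℝ) : Set (Locations n m) :=
  ⋃ p ∈ (univ : Finset (Fin m)).offDiag, isolatedPair i y δ H p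

lemma measurableSet_isolatedPair : MeasurableSet (isolatedPair i y δ H p) := by
  have hle {f g : Locations n m → ℝ} (hf : Measurable f) (hg : Measurable g) :
      Measurable fun ω => f ω ≤ g ω := measurableSet_setOfPred.1 (measurableSet_le hf hg)
  have hlt {f g : Locations n m → ℝ} (hf : Measurable f) (hg : Measurable g) :
      Measurable fun ω => f ω < g ω := measurableSet_setOfPred.1 (measurableSet_lt hf hg)
  refine measurableSet_setOfPred.2 (.and (.and ?_ ?_) (.and (.and ?_ ?_) (.and ?_ ?_)))
  · exact hlt (by fun_prop) (by fun_prop)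
  · exact hle (by fun_prop) (by fun_prop)
  · exact hlt (by fun_prop) (by fun_prop)
  · exact hle (by fun_prop) (by fun_prop)
  · exact .forall fun d => .imp measurable_const (.imp measurable_const
      (hlt (by fun_prop) (by fun_prop)))
  · exact .forall fun k => .imp measurable_const (hlt (by fun_prop) (by fun_prop))

lemma measurableSet_hasIsolatedPair : MeasurableSet (hasIsolatedPair m i y δ H) :=
  Finset.measurableSet_biUnion _ fun _ _ => measurableSet_isolatedPair

lemma ofReal_le_unifUnit_far (hH : 0 ≤ H) (s : ℝ) :
    ENNReal.ofReal (1 - 4 * H) ≤ unifUnit {x | 2 * H < |s - x|} := by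
  have hcompl : {x | 2 * H < |s - x|} = (Metric.closedBall s (2 * H))ᶜ := by
    ext x
    simp [Real.dist_eq, abs_sub_comm x]
  rw [hcompl, prob_compl_eq_one_sub measurableSet_closedBall, ENNReal.ofReal_sub _ (by positivity),
    ENNReal.ofReal_one]
  refine tsub_le_tsub_left ((unifUnit_le_volume _).trans_eq ?_) 1
  rw [Real.volume_closedBall]
  ring_nf

/-- The box of demand locations that form an isolated pair around a supply located at `s`. -/
def isolatedPairBox (s y δ H : ℝ) (p : Fin m × Fin m) (d : Fin m) : Set ℝ :=
  if d = p.1 then Set.Ico (s - y - δ) (s - y)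
  else if d = p.2 then Set.Ioc (s + y + δ) (s + y + 2 * δ)
  else {x | 2 * H < |s - x|}

lemma le_pi_isolatedPairBox (hy : 0 ≤ y) (hδ : 0 ≤ δ) (hyH : y + 2 * δ ≤ H) (hH : H ≤ 1 / 16)
    (hs : s ∈ Set.Icc (1 / 4 : ℝ) (3 / 4)) (hp : p.1 ≠ p.2) :
    ENNReal.ofReal δ * ENNReal.ofReal δ * ENNReal.ofReal (1 - 4 * H) ^ m ≤
      (Measure.pi fun _ => unifUnit) (Set.univ.pi (isolatedPairBox s y δ H p)) := by
  have hH0 : 0 ≤ H := by linarith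
  have hq1 : ENNReal.ofReal (1 - 4 * H) ≤ 1 := ENNReal.ofReal_le_one.2 (by linarith)
  have hprod : ENNReal.ofReal δ * ENNReal.ofReal δ * ENNReal.ofReal (1 - 4 * H) ^ m =
      ∏ d : Fin m, (if d = p.1 then ENNReal.ofReal δ else 1) *
        (if d = p.2 then ENNReal.ofReal δ else 1) * ENNReal.ofReal (1 - 4 * H) := by
    simp only [prod_mul_distrib, prod_ite_eq', mem_univ, if_true, prod_const, card_fin]
  rw [hprod, Measure.pi_pi]
  refine prod_le_prod' fun d _ => ?_
  unfold isolatedPairBox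
  split_ifs with h1 h2 h2
  · exact absurd (h1.symm.trans h2) hp
  · rw [unifUnit_Ico (by linarith [hs.1]) (by linarith [hs.2]), sub_sub_cancel, mul_one]
    exact mul_le_of_le_one_right' hq1
  · rw [unifUnit_Ioc (by linarith [hs.1]) (by linarith [hs.2]), one_mul,
      show s + y + 2 * δ - (s + y + δ) = δ by ring]
    exact mul_le_of_le_one_right' hq1
  · simpa using ofReal_le_unifUnit_far hH0 s

lemma le_sample_update_isolatedPair (hy : 0 ≤ y) (hδ : 0 ≤ δ) (hyH : y + 2 * δ ≤ H)
    (hH : H ≤ 1 / 16) (hs : s ∈ Set.Icc (1 / 4 : ℝ) (3 / 4)) (hp : p.1 ≠ p.2) :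
    ENNReal.ofReal (δ ^ 2 * (1 - 4 * H) ^ (n + m)) ≤
      sample n m {ω | (Function.update ω.1 i s, ω.2) ∈ isolatedPair i y δ H p} := by
  have hbox : (Set.univ.pi fun _ => {x | 2 * H < |s - x|}) ×ˢ
      Set.univ.pi (isolatedPairBox s y δ H p) ⊆
      {ω : Locations n m | (Function.update ω.1 i s, ω.2) ∈ isolatedPair i y δ H p} := by
    rintro ⟨S, D⟩ ⟨hS, hD⟩
    have hD1 := hD p.1 trivial
    have hD2 := hD p.2 trivial
    simp only [isolatedPairBox, if_true, if_neg hp.symm, Set.mem_Ico, Set.mem_Ioc] at hD1 hD2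
    simp only [isolatedPair, Set.mem_ofPred_eq, Function.update_self, Set.mem_Ioc]
    refine ⟨⟨by linarith, by linarith⟩, ⟨by linarith, by linarith⟩, fun d h1 h2 => ?_,
      fun k hk => ?_⟩
    · simpa [isolatedPairBox, h1, h2] using hD d trivial
    · simpa [Function.update_of_ne hk] using hS k trivial
  have hfar : ENNReal.ofReal (1 - 4 * H) ^ n ≤ (Measure.pi fun _ => unifUnit)
      (Set.univ.pi fun _ : Fin n => {x | 2 * H < |s - x|}) := by
    rw [Measure.pi_pi]
    simpa using pow_le_pow_left' (ofReal_le_unifUnit_far (by linarith) s) n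
  have hq : 0 ≤ 1 - 4 * H := by linarith
  calc ENNReal.ofReal (δ ^ 2 * (1 - 4 * H) ^ (n + m))
      = ENNReal.ofReal (1 - 4 * H) ^ n *
          (ENNReal.ofReal δ * ENNReal.ofReal δ * ENNReal.ofReal (1 - 4 * H) ^ m) := by
        rw [ENNReal.ofReal_mul (by positivity), ENNReal.ofReal_pow hδ, ENNReal.ofReal_pow hq]
        ring
    _ ≤ sample n m ((Set.univ.pi fun _ => {x | 2 * H < |s - x|}) ×ˢ
          Set.univ.pi (isolatedPairBox s y δ H p)) := by
        rw [sample, Measure.prod_prod]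
        exact mul_le_mul' hfar (le_pi_isolatedPairBox hy hδ hyH hH hs hp)
    _ ≤ _ := measure_mono hbox

lemma le_sample_isolatedPair (hy : 0 ≤ y) (hδ : 0 ≤ δ) (hyH : y + 2 * δ ≤ H) (hH : H ≤ 1 / 16)
    (hp : p.1 ≠ p.2) :
    ENNReal.ofReal (1 / 2 * δ ^ 2 * (1 - 4 * H) ^ (n + m)) ≤
      sample n m (isolatedPair i y δ H p) := by
  have hhalf : unifUnit (Set.Ico (1 / 4 : ℝ) (3 / 4)) = ENNReal.ofReal (1 / 2) := by
    rw [unifUnit_Ico (by norm_num) (by norm_num)]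
    norm_num
  calc ENNReal.ofReal (1 / 2 * δ ^ 2 * (1 - 4 * H) ^ (n + m))
      = ∫⁻ _ in Set.Ico (1 / 4 : ℝ) (3 / 4),
          ENNReal.ofReal (δ ^ 2 * (1 - 4 * H) ^ (n + m)) ∂unifUnit := by
        rw [setLIntegral_const, hhalf, ← ENNReal.ofReal_mul' (by norm_num)]
        ring_nf
    _ ≤ ∫⁻ s in Set.Ico (1 / 4 : ℝ) (3 / 4),
          sample n m {ω | (Function.update ω.1 i s, ω.2) ∈ isolatedPair i y δ H p} ∂unifUnit :=
        setLIntegral_mono' measurableSet_Ico fun s hs =>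
          le_sample_update_isolatedPair hy hδ hyH hH (Set.Ico_subset_Icc_self hs) hp
    _ ≤ ∫⁻ s, sample n m {ω | (Function.update ω.1 i s, ω.2) ∈ isolatedPair i y δ H p} ∂unifUnit :=
        setLIntegral_le_lintegral _ _
    _ = sample n m (isolatedPair i y δ H p) :=
        (measure_eq_lintegral_update_symm measurableSet_isolatedPair i).symm

lemma pairwise_disjoint_isolatedPair (hy : 0 ≤ y) (hyH : y + 2 * δ ≤ H) :
    Pairwise (Function.onFun Disjoint (isolatedPair (n := n) (m := m) i y δ H)) := by
  intro p p' hne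
  refine Set.disjoint_left.2 fun ω ⟨⟨h1, _⟩, ⟨h2, _⟩, hother, _⟩ ⟨⟨h1', h1H⟩, ⟨h2', h2H⟩, _, _⟩ =>
    hne (Prod.ext ?_ ?_)
  · by_contra hne1
    have hne2 : p'.1 ≠ p.2 := by rintro heq; rw [heq] at h1'; linarith
    have := hother p'.1 (Ne.symm hne1) hne2
    rw [abs_of_nonneg (by linarith)] at this
    linarith
  · by_contra hne2
    have hne1 : p'.2 ≠ p.1 := by rintro heq; rw [heq] at h2'; linarith
    have := hother p'.2 hne1 (Ne.symm hne2)
    rw [abs_sub_comm, abs_of_nonneg (by linarith)] at this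
    linarith

lemma le_sample_hasIsolatedPair (hy : 0 ≤ y) (hδ : 0 ≤ δ) (hyH : y + 2 * δ ≤ H) (hH : H ≤ 1 / 16) :
    (m * m - m : ℝ) * (1 / 2 * δ ^ 2 * (1 - 4 * H) ^ (n + m)) ≤
      (sample n m).real (hasIsolatedPair m i y δ H) := by
  have hpair : ∀ p ∈ (univ : Finset (Fin m)).offDiag, 1 / 2 * δ ^ 2 * (1 - 4 * H) ^ (n + m) ≤
      (sample n m).real (isolatedPair i y δ H p) := fun p hp =>
    (ENNReal.ofReal_le_iff_le_toReal (measure_ne_top _ _)).1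
      (le_sample_isolatedPair hy hδ hyH hH (mem_offDiag.1 hp).2.2)
  have hcard : (#(univ : Finset (Fin m)).offDiag : ℝ) = m * m - m := by
    rw [offDiag_card, card_fin, Nat.cast_sub (Nat.le_mul_self m), Nat.cast_mul]
  rw [hasIsolatedPair, measureReal_biUnion_finset
    ((pairwise_disjoint_isolatedPair hy hyH).set_pairwise _)
    fun _ _ => measurableSet_isolatedPair, ← hcard, ← nsmul_eq_mul]
  exact card_nsmul_le_sum _ _ _ hpair

end IsolatedPairs

section TwoSupplies

open Finset

variable {n m t : ℕ} {i j k : Fin n} {ρ ρ' : Fin n → ℝ} {ω ω' : Locations n m} {v x y δ H : ℝ}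

/-- The demands that an additional supply could serve when the supplies `i` and `j` are removed. -/
def exposed (ρ : Fin n → ℝ) (i j : Fin n) (ω : Locations n m) : Finset (Fin m) :=
  exposedSet (inRange ρ ω) {i, j}ᶜ

/-- The event that a demand exposed by removing `i` and `j` lies within `v` of supply `k`. -/
def reach (m : ℕ) (ρ : Fin n → ℝ) (i j k : Fin n) (v : ℝ) : Set (Locations n m) :=
  {ω | ∃ d ∈ exposed ρ i j ω, |ω.1 k - ω.2 d| ≤ v}

/-- The probability that supply `i`, given the service radius `v`, reaches a demand exposed by
removing `i` and `j`; by symmetry it is also the probability for `j`. -/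
def reachProb (m : ℕ) (ρ : Fin n → ℝ) (i j : Fin n) (v : ℝ) : ℝ :=
  (sample n m).real (reach m ρ i j i v)

/-- The expected maximum matching size in the absence of the supplies `i` and `j`, expressed as the
size of the cover determined by the exposed demands. -/
def baseSize (m : ℕ) (ρ : Fin n → ℝ) (i j : Fin n) : ℝ :=
  ∫ ω, (coverSize (inRange ρ ω) {i, j}ᶜ (exposed ρ i j ω) : ℝ) ∂sample n m

lemma inRange_congr_compl (hρ : ∀ k ∉ ({i, j} : Finset (Fin n)), ρ k = ρ' k)
    (hfst : ∀ k ∉ ({i, j} : Finset (Fin n)), ω.1 k = ω'.1 k) (hsnd : ω.2 = ω'.2) :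
    ∀ k ∈ ({i, j}ᶜ : Finset (Fin n)), ∀ d, inRange ρ ω k d ↔ inRange ρ' ω' k d := by
  intro k hk d
  rw [inRange, inRange, hρ k (mem_compl.1 hk), hfst k (mem_compl.1 hk), hsnd]

lemma exposed_congr (hρ : ∀ k ∉ ({i, j} : Finset (Fin n)), ρ k = ρ' k)
    (hfst : ∀ k ∉ ({i, j} : Finset (Fin n)), ω.1 k = ω'.1 k) (hsnd : ω.2 = ω'.2) :
    exposed ρ i j ω = exposed ρ' i j ω' :=
  exposedSet_congr (inRange_congr_compl hρ hfst hsnd)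

lemma reachProb_congr (hρ : ∀ k ∉ ({i, j} : Finset (Fin n)), ρ k = ρ' k) :
    reachProb m ρ i j v = reachProb m ρ' i j v := by
  simp only [reachProb, reach, exposed_congr hρ (fun _ _ => rfl) rfl]

lemma baseSize_congr (hρ : ∀ k ∉ ({i, j} : Finset (Fin n)), ρ k = ρ' k) :
    baseSize m ρ i j = baseSize m ρ' i j := by
  refine integral_congr_ae (Filter.Eventually.of_forall fun ω => congrArg Nat.cast ?_)
  rw [exposed_congr hρ (fun _ _ => rfl) rfl]
  exact coverSize_congr (inRange_congr_compl hρ (fun _ _ => rfl) rfl)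

lemma measurableSet_reach : MeasurableSet (reach m ρ i j k v) := by
  refine measurableSet_setOfPred.2 (Measurable.exists fun d => Measurable.and ?_ ?_)
  · exact Measurable.of_discrete (f := fun adj => d ∈ exposedSet adj {i, j}ᶜ)
      |>.comp (measurable_inRange ρ)
  · exact measurableSet_setOfPred.1 (measurableSet_le (by fun_prop) (by fun_prop))

lemma sample_real_reach_right : (sample n m).real (reach m ρ i j j v) = reachProb m ρ i j v := by
  have hswap := measurePreserving_sample_comp_perm (m := m) (Equiv.swap i j)
  rw [reachProb, ← hswap.measureReal_preimage measurableSet_reach.nullMeasurableSet]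
  congr 1
  ext ω
  have hexp : exposed ρ i j (ω.1 ∘ Equiv.swap i j, ω.2) = exposed ρ i j ω := by
    refine exposed_congr (fun _ _ => rfl) (fun k hk => ?_) rfl
    simp only [mem_insert, mem_singleton, not_or] at hk
    simp [Equiv.swap_apply_of_ne_of_ne hk.1 hk.2]
  simp [reach, hexp]

lemma hit_exposed (k : Fin n) (ω : Locations n m) :
    (hit (inRange ρ ω) k (exposed ρ i j ω) : ℝ) =
      (reach m ρ i j k (ρ k)).indicator (fun _ => (1 : ℝ)) ω := by
  by_cases hk : ω ∈ reach m ρ i j k (ρ k)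
  · rw [Set.indicator_of_mem hk, hit, if_pos (by exact hk), Nat.cast_one]
  · rw [Set.indicator_of_notMem hk, hit, if_neg (by exact hk), Nat.cast_zero]

lemma integral_hit_exposed (k : Fin n) :
    ∫ ω, (hit (inRange ρ ω) k (exposed ρ i j ω) : ℝ) ∂sample n m =
      (sample n m).real (reach m ρ i j k (ρ k)) := by
  simp only [hit_exposed]
  rw [integral_indicator_const _ measurableSet_reach, smul_eq_mul, mul_one]

lemma integral_coverSize_exposed (hij : i ≠ j) :
    ∫ ω, (coverSize (inRange ρ ω) univ (exposed ρ i j ω) : ℝ) ∂sample n m =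
      baseSize m ρ i j + reachProb m ρ i j (ρ i) + reachProb m ρ i j (ρ j) := by
  have hbase : Integrable (fun ω => (coverSize (inRange ρ ω) {i, j}ᶜ (exposed ρ i j ω) : ℝ))
      (sample n m) := integrable_comp_inRange ρ fun adj =>
    (coverSize adj {i, j}ᶜ (exposedSet adj {i, j}ᶜ) : ℝ)
  have hhit (k : Fin n) : Integrable (fun ω => (hit (inRange ρ ω) k (exposed ρ i j ω) : ℝ))
      (sample n m) := integrable_comp_inRange ρ fun adj => (hit adj k (exposedSet adj {i, j}ᶜ) : ℝ)
  simp only [coverSize_univ_eq_add_hit_add_hit hij, Nat.cast_add]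
  rw [integral_add (by exact hbase.add (hhit i)) (hhit j), integral_add hbase (hhit i),
    integral_hit_exposed, integral_hit_exposed, sample_real_reach_right]
  rfl

lemma integrable_coverSize_exposed :
    Integrable (fun ω => (coverSize (inRange ρ ω) univ (exposed ρ i j ω) : ℝ)) (sample n m) :=
  integrable_comp_inRange ρ fun adj => (coverSize adj univ (exposedSet adj {i, j}ᶜ) : ℝ)

lemma integrable_matchingNumber :
    Integrable (fun ω => (matchingNumber (inRange ρ ω) : ℝ)) (sample n m) :=
  integrable_comp_inRange ρ fun adj => (matchingNumber adj : ℝ)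

lemma expMatching_le_baseSize_add (hij : i ≠ j) :
    expMatching m ρ ≤ baseSize m ρ i j + reachProb m ρ i j (ρ i) + reachProb m ρ i j (ρ j) := by
  rw [← integral_coverSize_exposed hij]
  refine integral_mono integrable_matchingNumber integrable_coverSize_exposed fun ω => ?_
  exact Nat.cast_le.2 (matchingNumber_le_coverSize _)

lemma baseSize_add_le_expMatching (hij : i ≠ j) (hH : 0 < H) (hρ : ∀ k, ρ k ≤ H) (t : ℕ) :
    baseSize m ρ i j + reachProb m ρ i j (ρ i) + reachProb m ρ i j (ρ j) ≤
      expMatching m ρ + 2 * (sample n m).real (crowded i j t (2 * H)) := by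
  have hcrowded : Integrable ((crowded i j t (2 * H)).indicator fun _ => (2 : ℝ)) (sample n m) :=
    (integrable_const _).indicator measurableSet_crowded
  calc baseSize m ρ i j + reachProb m ρ i j (ρ i) + reachProb m ρ i j (ρ j)
      = ∫ ω, (coverSize (inRange ρ ω) univ (exposed ρ i j ω) : ℝ) ∂sample n m :=
        (integral_coverSize_exposed hij).symm
    _ ≤ ∫ ω, ((matchingNumber (inRange ρ ω) : ℝ) +
          (crowded i j t (2 * H)).indicator (fun _ => (2 : ℝ)) ω) ∂sample n m := by
        refine integral_mono integrable_coverSize_exposed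
          (integrable_matchingNumber.add hcrowded) fun ω => ?_
        by_cases hω : ω ∈ crowded i j t (2 * H)
        · simp only [Set.indicator_of_mem hω]
          exact_mod_cast coverSize_exposedSet_compl_pair_le_add_two (adj := inRange ρ ω) hij
        · simp only [Set.indicator_of_notMem hω, add_zero]
          exact_mod_cast coverSize_exposedSet_le_matchingNumber hij hH hρ hω
    _ = expMatching m ρ + 2 * (sample n m).real (crowded i j t (2 * H)) := by
        rw [integral_add integrable_matchingNumber hcrowded,
          integral_indicator_const _ measurableSet_crowded, smul_eq_mul, mul_comm, expMatching]

lemma setOf_update_mem_reach (hv : 0 ≤ v) (i j : Fin n) (ω : Locations n m) :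
    {s | (Function.update ω.1 i s, ω.2) ∈ reach m ρ i j i v} =
      Metric.cthickening v (ω.2 '' exposed ρ i j ω) := by
  have hexp (s : ℝ) : exposed ρ i j (Function.update ω.1 i s, ω.2) = exposed ρ i j ω := by
    refine exposed_congr (fun _ _ => rfl) (fun k hk => ?_) rfl
    simp only [mem_insert, mem_singleton, not_or] at hk
    exact Function.update_of_ne hk.1 _ _
  rw [((exposed ρ i j ω).finite_toSet.image ω.2).isCompact.cthickening_eq_biUnion_closedBall hv]
  ext s
  simp [reach, hexp, Real.dist_eq]

lemma setOf_update_mem_hasIsolatedPair_subset (hρ : ∀ k, ρ k ≤ H) (hδ : 0 ≤ δ) (hy : 0 ≤ y)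
    (hyH : y + 2 * δ ≤ H) (i j : Fin n) (ω : Locations n m) :
    {s | (Function.update ω.1 i s, ω.2) ∈ hasIsolatedPair m i y δ H} ⊆
      gapSet (ω.2 '' exposed ρ i j ω) y δ := by
  intro s hs
  simp only [hasIsolatedPair, Set.mem_ofPred_eq, Set.mem_iUnion] at hs
  obtain ⟨⟨a, b⟩, -, hs⟩ := hs
  simp only [isolatedPair, Set.mem_ofPred_eq, Function.update_self] at hs
  obtain ⟨ha, hb, hdemand, hsupply⟩ := hs
  have hexposed (d : Fin m) (hd : |s - ω.2 d| ≤ H) : ω.2 d ∈ ω.2 '' exposed ρ i j ω := by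
    refine Set.mem_image_of_mem _ (mem_exposedSet_of_isolated fun k hk hkd => ?_)
    simp only [mem_compl, mem_insert, mem_singleton, not_or] at hk
    have hfar := hsupply k hk.1
    rw [Function.update_of_ne hk.1] at hfar
    rw [inRange, abs_sub_comm] at hkd
    linarith [abs_sub_le s (ω.2 d) (ω.1 k), hρ k]
  refine ⟨ω.2 a, hexposed a ?_, ω.2 b, hexposed b ?_, ha, hb, ?_⟩
  · rw [abs_of_nonneg (by linarith [ha.1])]
    linarith [ha.2]
  · rw [abs_sub_comm, abs_of_nonneg (by linarith [hb.1])]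
    linarith [hb.2]
  · rw [Set.disjoint_left]
    rintro _ ⟨d, -, rfl⟩ ⟨had, hdb⟩
    have hfar := hdemand d (by rintro rfl; exact had.false) (by rintro rfl; exact hdb.false)
    rcases lt_abs.1 hfar with h | h <;> linarith [ha.2, hb.2]

-- Conditionally on all other locations, this is the concavity of the measure of neighbourhoods.
lemma reachProb_add_reachProb_add_le (hρ : ∀ k, ρ k ≤ H) (hy : 0 ≤ y) (hδ : 0 < δ)
    (hxy : y + δ ≤ x - δ) (hxH : x ≤ H) (i j : Fin n) :
    reachProb m ρ i j x + reachProb m ρ i j y +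
        (sample n m).real (hasIsolatedPair m i y δ H) ≤
      reachProb m ρ i j (x - δ) + reachProb m ρ i j (y + δ) := by
  have hslice : sample n m (reach m ρ i j i x) + sample n m (reach m ρ i j i y) +
      sample n m (hasIsolatedPair m i y δ H) ≤
        sample n m (reach m ρ i j i (x - δ)) + sample n m (reach m ρ i j i (y + δ)) := by
    simp only [sample, measure_eq_lintegral_update measurableSet_reach i,
      measure_eq_lintegral_update measurableSet_hasIsolatedPair i]
    rw [← lintegral_add_left (measurable_measure_update measurableSet_reach i),
      ← lintegral_add_left (measurable_measure_update measurableSet_reach i)]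
    refine (le_lintegral_add _ _).trans ?_
    refine lintegral_mono_ae (ae_sample_snd_mem_Icc.mono fun ω hω => ?_)
    rw [setOf_update_mem_reach (by linarith), setOf_update_mem_reach hy,
      setOf_update_mem_reach (by linarith), setOf_update_mem_reach (by linarith)]
    refine (add_le_add_right (measure_mono (setOf_update_mem_hasIsolatedPair_subset hρ hδ.le hy
      (by linarith) i j ω)) _).trans ?_
    exact unifUnit_cthickening_add_cthickening_add_gapSet_le
      ((exposed ρ i j ω).finite_toSet.image ω.2).isCompact
      (Set.image_subset_iff.2 fun d _ => hω d) hy hδ hxy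
  have hreal := ENNReal.toReal_mono (by finiteness) hslice
  rwa [ENNReal.toReal_add (by finiteness) (by finiteness),
    ENNReal.toReal_add (by finiteness) (by finiteness),
    ENNReal.toReal_add (by finiteness) (by finiteness)] at hreal

end TwoSupplies

section Transfers

open Finset

variable {n : ℕ} {i j k : Fin n} {r r' : Fin n → ℝ} {a b c e δ : ℝ}

/-- The Robin Hood transfer of the amount `δ` from coordinate `i` to coordinate `j`. -/
def transfer (i j : Fin n) (δ : ℝ) (r : Fin n → ℝ) : Fin n → ℝ :=
  r - Pi.single i δ + Pi.single j δ

lemma transfer_apply_left (hij : i ≠ j) : transfer i j δ r i = r i - δ := by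
  simp [transfer, hij]

lemma transfer_apply_right (hij : i ≠ j) : transfer i j δ r j = r j + δ := by
  simp [transfer, hij.symm]

lemma transfer_apply_of_ne (hki : k ≠ i) (hkj : k ≠ j) : transfer i j δ r k = r k := by
  simp [transfer, hki, hkj]

lemma transfer_div (i j : Fin n) (δ a : ℝ) (r : Fin n → ℝ) :
    (fun k => transfer i j δ r k / a) = transfer i j (δ / a) fun k => r k / a := by
  ext k
  simp only [transfer, Pi.add_apply, Pi.sub_apply, Pi.single_apply]
  split_ifs <;> ring

lemma transfer_mem_Icc (hij : i ≠ j) (hδ : 0 ≤ δ) (hle : r j + δ ≤ r i - δ)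
    (hr : ∀ k, r k ∈ Set.Icc a b) (k : Fin n) : transfer i j δ r k ∈ Set.Icc a b := by
  by_cases hki : k = i
  · rw [hki, transfer_apply_left hij]
    exact ⟨by linarith [(hr j).1], by linarith [(hr i).2]⟩
  by_cases hkj : k = j
  · rw [hkj, transfer_apply_right hij]
    exact ⟨by linarith [(hr j).1], by linarith [(hr i).2]⟩
  rw [transfer_apply_of_ne hki hkj]
  exact hr k

lemma sum_transfer {s : Finset (Fin n)} (hi : i ∈ s) (hj : j ∈ s) :
    ∑ k ∈ s, transfer i j δ r k = ∑ k ∈ s, r k := by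
  simp [transfer, sum_add_distrib, sum_pi_single', hi, hj]

lemma sum_abs_transfer_sub (hij : i ≠ j) (hδ : 0 ≤ δ) (hi : δ ≤ r i - r' i) (hj : δ ≤ r' j - r j) :
    ∑ k, |transfer i j δ r k - r' k| = ∑ k, |r k - r' k| - 2 * δ := by
  have habs (k : Fin n) : |transfer i j δ r k - r' k| =
      |r k - r' k| - (Pi.single i δ : Fin n → ℝ) k - (Pi.single j δ : Fin n → ℝ) k := by
    by_cases hki : k = i
    · rw [hki, transfer_apply_left hij, abs_of_nonneg (by linarith), abs_of_nonneg (by linarith)]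
      simp [hij, sub_right_comm]
    by_cases hkj : k = j
    · rw [hkj, transfer_apply_right hij, abs_of_nonpos (by linarith), abs_of_nonpos (by linarith)]
      simp [hij.symm, sub_sub]
    simp [transfer_apply_of_ne hki hkj, hki, hkj]
  simp only [habs, sum_sub_distrib, sum_pi_single', mem_univ, if_true]
  ring

lemma hammingDist_transfer_lt (hij : i ≠ j) (hi : r' i < r i) (hj : r j < r' j) :
    hammingDist (transfer i j (min (r i - r' i) (r' j - r j)) r) r' < hammingDist r r' := by
  refine card_lt_card ((ssubset_iff_of_subset fun k hk => ?_).2 ?_)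
  · simp only [mem_filter, mem_univ, true_and] at hk ⊢
    by_cases hki : k = i
    · exact hki ▸ hi.ne'
    by_cases hkj : k = j
    · exact hkj ▸ hj.ne
    rwa [transfer_apply_of_ne hki hkj] at hk
  · rcases min_choice (r i - r' i) (r' j - r j) with hmin | hmin
    · exact ⟨i, by simpa using hi.ne', by simp [hmin, transfer_apply_left hij]⟩
    · exact ⟨j, by simpa using hj.ne, by simp [hmin, transfer_apply_right hij]⟩

/-- Majorization of vectors whose coordinates are compared in the given order, without sorting. -/
def PrefixMajorizes (r r' : Fin n → ℝ) : Prop :=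
  (∀ ℓ : ℕ, ∑ k ∈ univ.filter (fun k : Fin n => (k : ℕ) < ℓ), r' k ≤
      ∑ k ∈ univ.filter (fun k : Fin n => (k : ℕ) < ℓ), r k) ∧
    ∑ k, r k = ∑ k, r' k

lemma PrefixMajorizes.exists_lt_lt (h : PrefixMajorizes r r') (hne : r ≠ r') :
    ∃ i j, i < j ∧ r' i < r i ∧ r j < r' j ∧ ∀ k < j, r' k ≤ r k := by
  obtain ⟨j, hj, hmin⟩ : ∃ j, r j < r' j ∧ ∀ k < j, r' k ≤ r k := by
    have hdeficit : ∃ k, r k < r' k := by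
      by_contra! hle
      have heq := (sum_eq_sum_iff_of_le fun k (_ : k ∈ univ) => hle k).1 h.2.symm
      exact hne (funext fun k => (heq k (mem_univ k)).symm)
    obtain ⟨j, hj, hmin⟩ := WellFounded.has_min wellFounded_lt {k | r k < r' k} hdeficit
    exact ⟨j, hj, fun k hk => not_lt.1 fun hlt => hmin k hlt hk⟩
  obtain ⟨i, hij, hi⟩ : ∃ i < j, r' i < r i := by
    by_contra! hle
    refine (h.1 (j + 1)).not_gt (sum_lt_sum (fun k hk => ?_) ⟨j, by simp, hj⟩)
    rcases (Nat.lt_succ_iff.1 (mem_filter.1 hk).2).lt_or_eq with hkj | hkj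
    · exact hle k hkj
    · exact Fin.ext hkj ▸ hj.le
  exact ⟨i, j, hij, hi, hj, hmin⟩

lemma PrefixMajorizes.transfer (h : PrefixMajorizes r r') (hij : i < j) (hi : δ ≤ r i - r' i)
    (hbefore : ∀ k < j, r' k ≤ r k) : PrefixMajorizes (transfer i j δ r) r' := by
  refine ⟨fun ℓ => ?_, (sum_transfer (mem_univ i) (mem_univ j)).trans h.2⟩
  rcases lt_or_ge (j : ℕ) ℓ with hjℓ | hjℓ
  · rw [sum_transfer (by simpa using (Fin.lt_def.1 hij).trans hjℓ) (by simpa using hjℓ)]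
    exact h.1 ℓ
  · refine sum_le_sum fun k hk => ?_
    have hkj : k < j := (mem_filter.1 hk).2.trans_le hjℓ
    by_cases hki : k = i
    · rw [hki, transfer_apply_left hij.ne]
      linarith
    · rw [transfer_apply_of_ne hki hkj.ne]
      exact hbefore k hkj

-- A transfer of `δ` gains `c * δ ^ 2 ≥ c * (2 * τ * δ - τ ^ 2)`, which is linear in the decrease
-- `2 * δ` of the `ℓ¹` distance, and at most one transfer per mismatched coordinate is needed.
lemma add_mul_sum_abs_le_of_forall_transfer {F : (Fin n → ℝ) → ℝ} (hc : 0 ≤ c) (he : 0 ≤ e)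
    (hF : ∀ (i j : Fin n) (r : Fin n → ℝ) (δ : ℝ), i ≠ j → 0 < δ → (∀ k, r k ∈ Set.Icc a b) →
      r j + δ ≤ r i - δ → F r + c * δ ^ 2 ≤ F (transfer i j δ r) + e)
    (τ : ℝ) (hr' : Antitone r') (hr : ∀ k, r k ∈ Set.Icc a b) (h : PrefixMajorizes r r') :
    F r + c * τ * ∑ k, |r k - r' k| ≤ F r' + hammingDist r r' * (c * τ ^ 2 + e) := by
  induction hd : hammingDist r r' using Nat.strong_induction_on generalizing r with
  | _ d ih =>
  subst hd
  rcases eq_or_ne r r' with rfl | hne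
  · simp
  obtain ⟨i, j, hij, hi, hj, hbefore⟩ := h.exists_lt_lt hne
  set δ := min (r i - r' i) (r' j - r j)
  have hδ : 0 < δ := lt_min (sub_pos.2 hi) (sub_pos.2 hj)
  have hδi : δ ≤ r i - r' i := min_le_left _ _
  have hδj : δ ≤ r' j - r j := min_le_right _ _
  have hle : r j + δ ≤ r i - δ := by linarith [hr' hij.le]
  have hdist : hammingDist (transfer i j δ r) r' < hammingDist r r' :=
    hammingDist_transfer_lt hij.ne hi hj
  have hstep := hF i j r δ hij.ne hδ hr hle
  have hrest := ih _ hdist (transfer_mem_Icc hij.ne hδ.le hle hr) (h.transfer hij hδi hbefore) rfl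
  rw [sum_abs_transfer_sub hij.ne hδ.le hδi hδj] at hrest
  have hcount : ((hammingDist (transfer i j δ r) r' : ℝ) + 1) * (c * τ ^ 2 + e) ≤
      hammingDist r r' * (c * τ ^ 2 + e) := by
    gcongr
    exact_mod_cast hdist
  linarith [mul_nonneg hc (sq_nonneg (δ - τ))]

end Transfers

section TransferGain

variable {n m : ℕ} {i j : Fin n} {ρ : Fin n → ℝ} {δ H : ℝ}

lemma sample_real_crowded_le (hij : i ≠ j) (hH : 0 ≤ H) (hH2 : 2 * H ≤ 1) (t : ℕ) :
    (sample n m).real (crowded i j t (2 * H)) ≤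
      2 * (t * (2 * H)) + (1 - (1 - 2 * H) ^ m) ^ t := by
  have hpow : (1 - 2 * H) ^ m ≤ 1 := pow_le_one₀ (by linarith) (by linarith)
  have hrare : 0 ≤ (1 - (1 - 2 * H) ^ m) ^ t := pow_nonneg (by linarith) t
  refine ENNReal.toReal_le_of_le_ofReal (by positivity) ?_
  rw [ENNReal.ofReal_add (by positivity) hrare]
  exact sample_crowded_le hij (by linarith) hH2

lemma expMatching_add_le_expMatching_transfer (hij : i ≠ j) (hH : 0 < H) (hH16 : H ≤ 1 / 16)
    (hρ : ∀ k, ρ k ∈ Set.Icc 0 H) (hδ : 0 < δ) (hle : ρ j + δ ≤ ρ i - δ) (t : ℕ) :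
    expMatching m ρ + (m * m - m : ℝ) * (1 / 2 * δ ^ 2 * (1 - 4 * H) ^ (n + m)) ≤
      expMatching m (transfer i j δ ρ) +
        2 * (2 * (t * (2 * H)) + (1 - (1 - 2 * H) ^ m) ^ t) := by
  have hoff (k : Fin n) (hk : k ∉ ({i, j} : Finset (Fin n))) : transfer i j δ ρ k = ρ k := by
    simp only [Finset.mem_insert, Finset.mem_singleton, not_or] at hk
    exact transfer_apply_of_ne hk.1 hk.2
  have hbefore := expMatching_le_baseSize_add (m := m) (ρ := ρ) hij
  have hafter := baseSize_add_le_expMatching (m := m) hij hH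
    (fun k => (transfer_mem_Icc hij hδ.le hle hρ k).2) t
  rw [baseSize_congr hoff, reachProb_congr hoff, reachProb_congr hoff, transfer_apply_left hij,
    transfer_apply_right hij] at hafter
  have hconcave := reachProb_add_reachProb_add_le (m := m) (fun k => (hρ k).2) (hρ j).1 hδ hle
    (hρ i).2 i j
  have hpairs := le_sample_hasIsolatedPair (n := n) (m := m) (i := i) (hρ j).1 hδ.le
    (by linarith [(hρ i).2]) hH16
  have hcrowded := sample_real_crowded_le (m := m) hij hH.le (by linarith) t
  linarith

end TransferGain

section Sorting

variable {n m : ℕ} {r r' : Fin n → ℝ}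

lemma antitone_descSort (r : Fin n → ℝ) : Antitone (descSort r) := fun _ _ hij =>
  neg_le_neg_iff.1 (Tuple.monotone_sort (fun k => -r k) hij)

lemma muU_one_eq_expMatching_descSort (r : Fin n → ℝ) :
    muU 1 n m r = expMatching m fun k => descSort r k / n := by
  rw [muU_one_eq_expMatching]
  exact (expMatching_comp_perm (fun k => r k / n) (Tuple.sort fun k => -r k)).symm

lemma Majorizes.prefixMajorizes_descSort (h : Majorizes r r') :
    PrefixMajorizes (descSort r) (descSort r') :=
  ⟨h.1, (Equiv.sum_comp _ r).trans (h.2.trans (Equiv.sum_comp _ r').symm)⟩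

end Sorting

section Asymptotics

variable {n m : ℕ} {w α β M : ℝ}

lemma exp_neg_two_mul_le_one_sub_pow (hw0 : 0 ≤ w) (hw : w ≤ 1 / 2) (k : ℕ) :
    Real.exp (-(2 * w * k)) ≤ (1 - w) ^ k := by
  have hbase : Real.exp (-(2 * w)) ≤ 1 - w := by
    rw [Real.exp_neg, inv_le_iff_one_le_mul₀ (Real.exp_pos _)]
    nlinarith [Real.add_one_le_exp (2 * w)]
  calc Real.exp (-(2 * w * k)) = Real.exp (-(2 * w)) ^ k := by rw [← Real.exp_nat_mul]; ring_nf
    _ ≤ (1 - w) ^ k := pow_le_pow_left₀ (Real.exp_pos _).le hbase k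

/-- A lower bound for the coefficient of `δ ^ 2` in the gain of a transfer of the amount `δ`. -/
def gainRate (α β M : ℝ) : ℝ := α ^ 2 / 4 * Real.exp (-(8 * M * (1 + β)))

/-- The loss of a transfer due to crowded pairs is at most this multiple of `log n / n`.  The value
comes from the crowding threshold `t = ⌈log n / p⌉₊` with `p = exp (-4 M β)`. -/
def errorRate (β M : ℝ) : ℝ := 8 * M * (1 / Real.exp (-(4 * M * β)) + 1) + 2

lemma gainRate_mul_sq_le (hα : 0 ≤ α) (hM : 0 ≤ M) (hn : 0 < n) (hMn : M / n ≤ 1 / 16)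
    (hαm : α * n ≤ m) (hmβ : m ≤ β * n) (hm : 2 ≤ m) (δ : ℝ) :
    gainRate α β M * δ ^ 2 ≤
      (m * m - m : ℝ) * (1 / 2 * (δ / n) ^ 2 * (1 - 4 * (M / n)) ^ (n + m)) := by
  have hn' : (0 : ℝ) < n := Nat.cast_pos.2 hn
  have hMn0 : 0 ≤ M / n := div_nonneg hM hn'.le
  have hpow : Real.exp (-(8 * M * (1 + β))) ≤ (1 - 4 * (M / n)) ^ (n + m) := by
    refine le_trans (Real.exp_le_exp.2 (neg_le_neg ?_))
      (exp_neg_two_mul_le_one_sub_pow (by linarith) (by linarith) (n + m))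
    calc 2 * (4 * (M / n)) * ((n + m : ℕ) : ℝ) ≤ 2 * (4 * (M / n)) * (n + β * n) := by
          push_cast; gcongr
      _ = 8 * M * (1 + β) := by field_simp; ring
  have hm2 : (2 : ℝ) ≤ m := by exact_mod_cast hm
  have hpairs : (α * n) ^ 2 / 2 ≤ (m * m - m : ℝ) :=
    calc (α * n) ^ 2 / 2 ≤ (m : ℝ) ^ 2 / 2 := by gcongr
      _ ≤ (m * m - m : ℝ) := by nlinarith
  have hpairs0 : (0 : ℝ) ≤ m * m - m := le_trans (by positivity) hpairs
  calc gainRate α β M * δ ^ 2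
      = (α * n) ^ 2 / 2 * (1 / 2 * (δ / n) ^ 2 * Real.exp (-(8 * M * (1 + β)))) := by
        unfold gainRate; field_simp; ring
    _ ≤ (m * m - m : ℝ) * (1 / 2 * (δ / n) ^ 2 * (1 - 4 * (M / n)) ^ (n + m)) := by gcongr

lemma one_sub_one_sub_pow_pow_le (hM : 0 ≤ M) (hn : 0 < n) (hMn : M / n ≤ 1 / 16)
    (hmβ : m ≤ β * n) {t : ℕ} (ht : Real.log n / Real.exp (-(4 * M * β)) ≤ t) :
    (1 - (1 - 2 * (M / n)) ^ m) ^ t ≤ 1 / n := by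
  have hn' : (0 : ℝ) < n := Nat.cast_pos.2 hn
  have hMn0 : 0 ≤ M / n := by positivity
  set p := Real.exp (-(4 * M * β))
  have hp : p ≤ (1 - 2 * (M / n)) ^ m := by
    refine le_trans (Real.exp_le_exp.2 (neg_le_neg ?_))
      (exp_neg_two_mul_le_one_sub_pow (by linarith) (by linarith) m)
    calc 2 * (2 * (M / n)) * (m : ℝ) ≤ 2 * (2 * (M / n)) * (β * n) := by gcongr
      _ = 4 * M * β := by field_simp; ring
  have hpow : (1 - 2 * (M / n)) ^ m ≤ 1 := pow_le_one₀ (by linarith) (by linarith)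
  calc (1 - (1 - 2 * (M / n)) ^ m) ^ t ≤ Real.exp (-p) ^ t :=
        pow_le_pow_left₀ (by linarith) (by linarith [Real.one_sub_le_exp_neg p]) t
    _ = Real.exp (-(t * p)) := by rw [← Real.exp_nat_mul, mul_neg]
    _ ≤ Real.exp (-Real.log n) := by
        rw [div_le_iff₀ (Real.exp_pos _)] at ht
        exact Real.exp_le_exp.2 (neg_le_neg ht)
    _ = 1 / n := by rw [Real.exp_neg, Real.exp_log hn', one_div]

lemma exists_crowded_bound_le (hM : 0 ≤ M) (hn : 3 ≤ n) (hMn : M / n ≤ 1 / 16)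
    (hmβ : m ≤ β * n) :
    ∃ t : ℕ, 2 * (2 * (t * (2 * (M / n))) + (1 - (1 - 2 * (M / n)) ^ m) ^ t) ≤
      errorRate β M * (Real.log n / n) := by
  have hn' : (3 : ℝ) ≤ n := by exact_mod_cast hn
  set p := Real.exp (-(4 * M * β)) with hp
  have hlog : 1 ≤ Real.log n := by
    rw [Real.le_log_iff_exp_le (by linarith)]
    linarith [Real.exp_one_lt_d9]
  refine ⟨⌈Real.log n / p⌉₊, ?_⟩
  have hrare := one_sub_one_sub_pow_pow_le hM (by lia) hMn hmβ (Nat.le_ceil (Real.log n / p))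
  have hceil : (⌈Real.log n / p⌉₊ : ℝ) ≤ (1 / p + 1) * Real.log n := by
    have := Nat.ceil_lt_add_one (a := Real.log n / p) (by positivity)
    linarith [show Real.log n / p = 1 / p * Real.log n by ring]
  calc 2 * (2 * (⌈Real.log n / p⌉₊ * (2 * (M / n))) +
        (1 - (1 - 2 * (M / n)) ^ m) ^ ⌈Real.log n / p⌉₊)
      ≤ 2 * (2 * ((1 / p + 1) * Real.log n * (2 * (M / n))) + Real.log n / n) := by
        gcongr
        exact hrare.trans (by gcongr)
    _ = errorRate β M * (Real.log n / n) := by rw [errorRate, ← hp]; ring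

end Asymptotics

section UniformityPrinciple

variable {n m : ℕ} {α β M : ℝ} {r r' : Fin n → ℝ}

lemma muU_add_gainRate_mul_sum_le (hα : 0 ≤ α) (hM : 0 < M) (hn : 3 ≤ n) (hMn : M / n ≤ 1 / 16)
    (hαm : α * n ≤ m) (hmβ : m ≤ β * n) (hm : 2 ≤ m) (hr : ∀ k, r k ∈ Set.Icc 0 M)
    (hmaj : Majorizes r r') (τ : ℝ) :
    muU 1 n m r + gainRate α β M * τ * ∑ k, |descSort r k - descSort r' k| ≤
      muU 1 n m r' + n * (gainRate α β M * τ ^ 2 + errorRate β M * (Real.log n / n)) := by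
  have hn' : (0 : ℝ) < n := by positivity
  have hgain : 0 ≤ gainRate α β M := by unfold gainRate; positivity
  have herror : 0 ≤ errorRate β M * (Real.log n / n) := by unfold errorRate; positivity
  obtain ⟨t, ht⟩ := exists_crowded_bound_le hM.le hn hMn hmβ
  have hchain := add_mul_sum_abs_le_of_forall_transfer (r := descSort r)
    (F := fun s => expMatching m fun k => s k / n) hgain herror
    (fun i j s δ hij hδ hs hle => ?_) τ (antitone_descSort r') (fun k => hr _)
    hmaj.prefixMajorizes_descSort
  · rw [muU_one_eq_expMatching_descSort, muU_one_eq_expMatching_descSort]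
    refine hchain.trans ?_
    gcongr
    simpa using hammingDist_le_card_fintype (x := descSort r) (y := descSort r')
  · have hstep := expMatching_add_le_expMatching_transfer (m := m) (δ := δ / n) hij
      (by positivity) hMn
      (fun k => ⟨div_nonneg (hs k).1 hn'.le, div_le_div_of_nonneg_right (hs k).2 hn'.le⟩)
      (by positivity)
      (by simpa only [add_div, sub_div] using div_le_div_of_nonneg_right hle hn'.le) t
    rw [← transfer_div] at hstep
    linarith [gainRate_mul_sq_le hα hM.le (by lia) hMn hαm hmβ hm δ]

theorem uniformity_principle_dim_one_general (α β M : ℝ) (hα : 0 < α) (hM : 0 < M) :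
    ∃ C : ℝ, 0 < C ∧ ∃ N : ℕ, ∀ n : ℕ, N ≤ n → ∀ m : ℕ, α * n ≤ m → m ≤ β * n →
      ∀ r r' : Fin n → ℝ, (∀ i, r i ∈ Set.Icc (0 : ℝ) M) → Majorizes r r' →
        ∀ θ : ℝ, C * √(Real.log n / n) < θ →
          θ * n < ∑ i, |descSort r i - descSort r' i| →
          muU 1 n m r < muU 1 n m r' := by
  have hgain : 0 < gainRate α β M := by unfold gainRate; positivity
  have herror : 0 < errorRate β M := by unfold errorRate; positivity
  have hlarge : ∀ᶠ n : ℕ in Filter.atTop, 3 ≤ n ∧ M / n ≤ 1 / 16 ∧ 2 ≤ α * n :=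
    (Filter.eventually_ge_atTop 3).and <|
      ((tendsto_const_div_atTop_nhds_zero_nat M).eventually_le_const (by norm_num)).and <|
        (tendsto_natCast_atTop_atTop.const_mul_atTop hα).eventually_ge_atTop 2
  obtain ⟨N, hN⟩ := Filter.eventually_atTop.1 hlarge
  refine ⟨√(4 * errorRate β M / gainRate α β M), by positivity, N, ?_⟩
  intro n hn m hαm hmβ r r' hr hmaj θ hθ hdist
  obtain ⟨hn3, hMn, hαn⟩ := hN n hn
  have hn0 : (0 : ℝ) < n := by positivity
  have hθ0 : 0 < θ := lt_of_le_of_lt (by positivity) hθ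
  have hsq : 4 * (errorRate β M * (Real.log n / n)) < gainRate α β M * θ ^ 2 := by
    rw [← Real.sqrt_mul (by positivity), Real.sqrt_lt' hθ0, div_mul_eq_mul_div,
      div_lt_iff₀ hgain] at hθ
    linarith
  have hbound := muU_add_gainRate_mul_sum_le hα.le hM hn3 hMn hαm hmβ
    (by exact_mod_cast hαn.trans hαm) hr hmaj (θ / 2)
  have hfar := mul_lt_mul_of_pos_left hdist (by positivity : 0 < gainRate α β M * (θ / 2))
  have herr := mul_lt_mul_of_pos_left hsq hn0
  linarith

end UniformityPrinciple

/-- **Uniformity principle in dimension one.**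
Fix a demand-to-supply ratio `β > 0` and a constant `M ≥ max {1, 1/β}`, and let `k = 1`.
There exist a constant `C > 0` (depending only on `β` and `M`) and an integer `N` such that
for all `n ≥ N` with `m = βn`, and all service-range vectors `r, r' ∈ [0,M]^n` with
`r ⪰ r'` and `‖r^↓ - r'^↓‖₁ > θ n` for some `θ > C (log n / n)^{1/3}`, the expected
maximum matching sizes satisfy `μ_m(r') > μ_m(r)`. -/
theorem uniformity_principle_dim_one (β M : ℝ) (hβ : 0 < β) (hM : max 1 β⁻¹ ≤ M) :
    ∃ C : ℝ, 0 < C ∧ ∃ N : ℕ, ∀ n : ℕ, N ≤ n → ∀ m : ℕ, (m : ℝ) = β * n →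
      ∀ r r' : Fin n → ℝ,
        (∀ i, r i ∈ Set.Icc (0 : ℝ) M) → (∀ i, r' i ∈ Set.Icc (0 : ℝ) M) →
        Majorizes r r' →
        ∀ θ : ℝ, C * (Real.log n / n) ^ ((1 : ℝ) / 3) < θ →
          θ * n < ∑ i, |descSort r i - descSort r' i| →
          muU 1 n m r < muU 1 n m r' := by
  have hM0 : 0 < M := one_pos.trans_le ((le_max_left _ _).trans hM)
  obtain ⟨C, hC, N, hunif⟩ := uniformity_principle_dim_one_general β β M hβ hM0
  refine ⟨C, hC, N, fun n hn m hm r r' hr _ hmaj θ hθ =>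
    hunif n hn m hm.ge hm.le r r' hr hmaj θ (lt_of_le_of_lt ?_ hθ)⟩
  rw [Real.sqrt_eq_rpow]
  exact mul_le_mul_of_nonneg_left (Real.rpow_le_rpow_of_exponent_ge' (by positivity)
    (div_le_one_of_le₀ (Real.log_le_self n.cast_nonneg) n.cast_nonneg) (by norm_num)
    (by norm_num)) hC.le

end
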